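/- Fix 1 ≤ p ≤ ∞ and integers d ≥ 1 and 1 ≤ k ≤ d such that either d = k = 3, or d ≥ 3 and k = 2. Then H^p(𝕋^d) enjoys the contractive restriction property of dimension k if and only if p ∉ {2, 4}. -/

import Mathlib

open MeasureTheory
open scoped Classical ENNReal

noncomputable section

/-- The `d`-dimensional torus, modelled as `d` copies of `ℝ/ℤ`,
whose product `volume` measure is the normalized Haar measure. -/
abbrev Torus (d : ℕ) := Fin d → AddCircle (1 : ℝ)

/-- The character `z ↦ z^α` on the torus. -/
def torusChar {d : ℕ} (α : Fin d → ℤ) (x : Torus d) : ℂ :=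
  ∏ j, fourier (α j) (x j)

/-- The trigonometric polynomial with frequencies in `F` and coefficients `a`. -/
def trigPoly {d : ℕ} (F : Finset (Fin d → ℤ)) (a : (Fin d → ℤ) → ℂ) (x : Torus d) : ℂ :=
  ∑ α ∈ F, a α * torusChar α x

/-- The set `ℕ₀^d` of multi-indices with nonnegative entries. -/
def NN (d : ℕ) : Set (Fin d → ℤ) := {α | ∀ j, 0 ≤ α j}

/-- `Λ` is a coset in `ℤ^d`, i.e. a translate of a subgroup. -/
def IsCoset {d : ℕ} (Λ : Set (Fin d → ℤ)) : Prop :=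
  ∃ (x : Fin d → ℤ) (H : AddSubgroup (Fin d → ℤ)),
    Λ = (x + ·) '' (H : Set (Fin d → ℤ))

/-- `Λ` is a contractive projection set for `L^p(𝕋^d)`:
the projection onto frequencies in `Λ` is contractive on trigonometric polynomials. -/
def IsContractiveLp (d : ℕ) (p : ℝ≥0∞) (Λ : Set (Fin d → ℤ)) : Prop :=
  ∀ (F : Finset (Fin d → ℤ)) (a : (Fin d → ℤ) → ℂ),
    eLpNorm (trigPoly (F.filter (· ∈ Λ)) a) p volume ≤ eLpNorm (trigPoly F a) p volume

/-- `Γ` is a contractive projection set for `H^p(𝕋^d)`: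
the projection onto frequencies in `Γ` is contractive on analytic polynomials. -/
def IsContractiveHp (d : ℕ) (p : ℝ≥0∞) (Γ : Set (Fin d → ℤ)) : Prop :=
  ∀ F : Finset (Fin d → ℤ), ↑F ⊆ NN d → ∀ a : (Fin d → ℤ) → ℂ,
    eLpNorm (trigPoly (F.filter (· ∈ Γ)) a) p volume ≤ eLpNorm (trigPoly F a) p volume

/-- `Γ` has dimension `k`: the subgroup generated by the differences `γ - γ₀` has rank `k`. -/
def HasDim {d : ℕ} (Γ : Set (Fin d → ℤ)) (k : ℕ) : Prop :=
  ∀ γ₀ ∈ Γ, Module.finrank ℤ (Submodule.span ℤ ((· - γ₀) '' Γ)) = k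

/-- `H^p(𝕋^d)` enjoys the contractive restriction property of dimension `k`:
every `k`-dimensional contractive projection set for `H^p(𝕋^d)` is the restriction
of a coset in `ℤ^d` to `ℕ₀^d`. -/
def ContractiveRestrictionProperty (d : ℕ) (p : ℝ≥0∞) (k : ℕ) : Prop :=
  ∀ Γ : Set (Fin d → ℤ), Γ.Nonempty → Γ ⊆ NN d → HasDim Γ k → IsContractiveHp d p Γ →
    ∃ Λ : Set (Fin d → ℤ), IsCoset Λ ∧ Γ = Λ ∩ NN d

/-- The coset `Λ(Γ)` in `ℤ^d` generated by `Γ`. -/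
def cosetGen {d : ℕ} (Γ : Set (Fin d → ℤ)) : Set (Fin d → ℤ) :=
  ⋃ γ₀ ∈ Γ, (γ₀ + ·) '' (AddSubgroup.closure ((· - γ₀) '' Γ) : Set (Fin d → ℤ))

/-- The `n`-extension `E_n(Γ)`: all points of `Λ(Γ) ∩ ℕ₀^d` at distance at most `n` from `Γ`. -/
def Eext {d : ℕ} (n : ℕ) (Γ : Set (Fin d → ℤ)) : Set (Fin d → ℤ) :=
  {lam | lam ∈ cosetGen Γ ∩ NN d ∧ ∃ γ ∈ Γ, ∃ m : (Fin d → ℤ) →₀ ℤ,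
    (↑m.support : Set (Fin d → ℤ)) ⊆ Γ \ {γ} ∧
    lam = γ + ∑ α ∈ m.support, m α • (α - γ) ∧
    (∑ α ∈ m.support, max (m α) 0) ≤ (n : ℤ) ∧
    (∑ α ∈ m.support, max (-(m α)) 0) ≤ (n : ℤ)}

/-- Iterated `n`-extensions `E_n^k(Γ)`. -/
def EextIter {d : ℕ} (n : ℕ) : ℕ → Set (Fin d → ℤ) → Set (Fin d → ℤ)
  | 0, Γ => Eext n Γ
  | (k + 1), Γ => Eext n (EextIter n k Γ)

/-- The `n`-completion `E_n^∞(Γ)`. -/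
def EextInf {d : ℕ} (n : ℕ) (Γ : Set (Fin d → ℤ)) : Set (Fin d → ℤ) :=
  ⋃ k, EextIter n k Γ

/-!
Perturb a polynomial `f` without zeros and with frequencies in `Γ` by a character `z^κ` with
`κ ∈ ℕ₀^d \ Γ`. Contractivity forces the first variation of `‖f‖_p^p` to vanish, that is,
`∫ |f|^(p - 2) * conj f * z^κ = 0`. For `f = z^γ * (1 + ζ * ∑ z^(e i))` the binomial series turns
this into a power series identity in `ζ` and `conj ζ`. Its coefficient at `conj ζ^3 * ζ^2` counts
the ways to write `κ - γ` as a sum of three of the `e i` minus a sum of two of them, with weight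
`choose (p / 2) 3 * choose (p / 2 - 1) 2`, which vanishes only for `p ∈ {2, 4}`. Otherwise `Γ`
therefore contains every point of `ℕ₀^d` of the form `a + b + c - u - v` with `a, b, c, u, v ∈ Γ`.
For `p = ∞` this holds because subtracting a small multiple of the character of
`a + b + c - u - v` from the sum of the characters of `a, b, c, u, v` lowers its maximum.

In dimension two, a descent on barycentric coordinates with respect to a triangle of minimal area
in `Γ` shows that such a set is the trace of a coset. In `ℕ₀^3`, let `v ≥ 0` be a period of `Γ`
with as few zero coordinates as possible. If there are none, `Γ` is the trace of a coset; otherwise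
the projection of `Γ` onto the zero coordinates of `v` is an antichain, hence finite, and looking
at its extreme points one finds that it lies in a hyperplane, so that `Γ` does not have full
dimension.

For `p ∈ {2, 4}`, closedness under `a + b - c` is sufficient for contractivity, and it does not
imply closedness under `a + b + c - u - v`.
-/

section LatticeConvexity

variable {M : Type*} [AddCommGroup M]

/-- Convexity for subsets of a lattice: every lattice point which is a convex combination, with
rational weights `k / N`, `l / N`, `m / N`, of three points of `P` lies in `P`. -/
def LatticeConvex (P : Set M) : Prop :=
  ∀ ⦃N k l m : ℤ⦄ ⦃u v w x : M⦄, 0 < N → 0 ≤ k → 0 ≤ l → 0 ≤ m → k + l + m = N →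
    u ∈ P → v ∈ P → w ∈ P → N • x = k • u + l • v + m • w → x ∈ P

/-- `G ⊆ P` contains every point of `P` of the form `a + b + c - u - v` with `a, b, c, u, v ∈ G`.
For `P = ℕ₀^d` this is the paper's condition that `G` equals its `2`-extension. -/
structure TwoClosed (P G : Set M) : Prop where
  subset : G ⊆ P
  mem : ∀ ⦃a b c u v : M⦄, a ∈ G → b ∈ G → c ∈ G → u ∈ G → v ∈ G →
    a + b + c - u - v ∈ P → a + b + c - u - v ∈ G

theorem LatticeConvex.preimage {M' : Type*} [AddCommGroup M'] {P : Set M} (hP : LatticeConvex P)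
    (g : M) (f : M' →ₗ[ℤ] M) : LatticeConvex ((fun x ↦ g + f x) ⁻¹' P) := by
  intro N k l m u v w x hN hk hl hm hsum hu hv hw hx
  refine hP hN hk hl hm hsum hu hv hw ?_
  have hfx := congrArg f hx
  simp only [map_add, map_smul] at hfx
  rw [smul_add, hfx, ← hsum]
  module

namespace TwoClosed

variable {P G : Set M}

theorem preimage {M' : Type*} [AddCommGroup M'] (hG : TwoClosed P G)
    (g : M) (f : M' →ₗ[ℤ] M) :
    TwoClosed ((fun x ↦ g + f x) ⁻¹' P) ((fun x ↦ g + f x) ⁻¹' G) where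
  subset _ hx := hG.subset hx
  mem a b c u v ha hb hc hu hv h := by
    have heq : g + f (a + b + c - u - v)
        = (g + f a) + (g + f b) + (g + f c) - (g + f u) - (g + f v) := by
      simp only [map_add, map_sub]; abel
    rw [Set.mem_preimage, heq] at h ⊢
    exact hG.mem ha hb hc hu hv h

theorem add_sub_mem (hG : TwoClosed P G) {a b c : M} (ha : a ∈ G) (hb : b ∈ G)
    (hc : c ∈ G) (h : a + b - c ∈ P) : a + b - c ∈ G := by
  have heq : a + b - c = a + b + c - c - c := by abel
  rw [heq] at h ⊢
  exact hG.mem ha hb hc hc hc h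

theorem add_add_sub_sub_mem_iff (hG : TwoClosed P G) {a b u v l : M} (ha : a ∈ G)
    (hb : b ∈ G) (hu : u ∈ G) (hv : v ∈ G) (hl : l ∈ P) (h : l + a + b - u - v ∈ P) :
    l + a + b - u - v ∈ G ↔ l ∈ G := by
  refine ⟨fun hm ↦ ?_, fun hlG ↦ hG.mem hlG ha hb hu hv h⟩
  have heq : l = (l + a + b - u - v) + u + v - a - b := by abel
  rw [heq] at hl ⊢
  exact hG.mem hm hu hv ha hb hl

theorem add_sub_mem_iff (hG : TwoClosed P G) {a u l : M} (ha : a ∈ G)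
    (hu : u ∈ G) (hl : l ∈ P) (h : l + a - u ∈ P) : l + a - u ∈ G ↔ l ∈ G := by
  have heq : l + a - u = l + a + a - u - a := by abel
  rw [heq] at h ⊢
  exact hG.add_add_sub_sub_mem_iff ha ha hu ha hl h

theorem translate_submodule (a : M) (S : Submodule ℤ M) :
    TwoClosed Set.univ {x | x - a ∈ S} where
  subset := Set.subset_univ _
  mem x y z u v hx hy hz hu hv _ := by
    have heq : x + y + z - u - v - a = (x - a) + (y - a) + (z - a) - (u - a) - (v - a) := by abel
    rw [Set.mem_ofPred_eq, heq]
    exact sub_mem (sub_mem (add_mem (add_mem hx hy) hz) hu) hv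

end TwoClosed

/-- The integers `x, y, z` are `D` times barycentric coordinates of `l` with respect to the
triangle `a, b, c`. -/
structure Barycentric (D : ℤ) (a b c l : M) (x y z : ℤ) : Prop where
  sum : x + y + z = D
  smul : D • l = x • a + y • b + z • c

namespace Barycentric

variable {D x y z : ℤ} {a b c l : M}

theorem swap (h : Barycentric D a b c l x y z) : Barycentric D a c b l x z y :=
  ⟨by linarith [h.sum], by rw [h.smul]; abel⟩

theorem rotate (h : Barycentric D a b c l x y z) : Barycentric D b c a l y z x :=
  ⟨by linarith [h.sum], by rw [h.smul]; abel⟩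

theorem shift (h : Barycentric D a b c l x y z) :
    Barycentric D a b c (l + a - c) (x + D) y (z - D) :=
  ⟨by linarith [h.sum], by rw [smul_sub, smul_add, h.smul]; module⟩

theorem shift_two (h : Barycentric D a b c l x y z) :
    Barycentric D a b c (l + b + c - a - a) (x - 2 * D) (y + D) (z + D) :=
  ⟨by linarith [h.sum], by simp only [smul_sub, smul_add, h.smul]; module⟩

theorem reflect_midpoint (h : Barycentric D a b c l x y z) :
    Barycentric D (b + c - a) b c l (-x) (y + x) (z + x) :=
  ⟨by linarith [h.sum], by rw [h.smul]; module⟩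

theorem reflect_vertex (h : Barycentric D a b c l x y z) :
    Barycentric D a b (a + a - c) l (x + 2 * z) y (-z) :=
  ⟨by linarith [h.sum], by rw [h.smul]; module⟩

end Barycentric

end LatticeConvexity

section Planar

/-- The standard area form on `ℤ²`. -/
def areaForm : (ℤ × ℤ) →ₗ[ℤ] (ℤ × ℤ) →ₗ[ℤ] ℤ :=
  LinearMap.mk₂ ℤ (fun u v ↦ u.1 * v.2 - u.2 * v.1)
    (fun u v w ↦ by simp only [Prod.fst_add, Prod.snd_add]; ring)
    (fun r u v ↦ by simp only [Prod.smul_fst, Prod.smul_snd, smul_eq_mul]; ring)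
    (fun u v w ↦ by simp only [Prod.fst_add, Prod.snd_add]; ring)
    (fun r u v ↦ by simp only [Prod.smul_fst, Prod.smul_snd, smul_eq_mul]; ring)

theorem areaForm_apply (u v : ℤ × ℤ) : areaForm u v = u.1 * v.2 - u.2 * v.1 := rfl

theorem exists_areaForm_ne_zero_of_span_eq_top {s : Set (ℤ × ℤ)}
    (hs : Submodule.span ℤ s = ⊤) : ∃ u ∈ s, ∃ v ∈ s, areaForm u v ≠ 0 := by
  by_contra! hzero
  have hleft : ∀ u ∈ s, areaForm u = 0 := fun u hu ↦ LinearMap.ext_on hs fun v hv ↦ hzero u hu v hv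
  have hform : areaForm = 0 := LinearMap.ext_on hs fun u hu ↦ hleft u hu
  have hunit : areaForm (1, 0) (0, 1) = 0 := by rw [hform]; rfl
  simp [areaForm_apply] at hunit

theorem areaForm_dvd_of_mem_span_pair {u v s t : ℤ × ℤ} (hs : s ∈ Submodule.span ℤ {u, v})
    (ht : t ∈ Submodule.span ℤ {u, v}) : areaForm u v ∣ areaForm s t := by
  obtain ⟨i, j, rfl⟩ := Submodule.mem_span_pair.1 hs
  obtain ⟨k, l, rfl⟩ := Submodule.mem_span_pair.1 ht
  refine ⟨i * l - j * k, ?_⟩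
  simp only [areaForm_apply, Prod.fst_add, Prod.snd_add, Prod.smul_fst, Prod.smul_snd, smul_eq_mul]
  ring

/-- Twice the signed area of the triangle `a, b, c`. -/
def triangleArea (a b c : ℤ × ℤ) : ℤ := areaForm (b - a) (c - a)

theorem triangleArea_eq (a b c : ℤ × ℤ) :
    triangleArea a b c = (b.1 - a.1) * (c.2 - a.2) - (b.2 - a.2) * (c.1 - a.1) := rfl

theorem triangleArea_rotate (a b c : ℤ × ℤ) : triangleArea b c a = triangleArea a b c := by
  simp only [triangleArea_eq]; ring

theorem triangleArea_swap (a b c : ℤ × ℤ) : triangleArea a c b = -triangleArea a b c := by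
  simp only [triangleArea_eq]; ring

theorem triangleArea_reflect_midpoint (a b c : ℤ × ℤ) :
    triangleArea (b + c - a) b c = -triangleArea a b c := by
  simp only [triangleArea_eq, Prod.fst_add, Prod.snd_add, Prod.fst_sub, Prod.snd_sub]; ring

theorem triangleArea_reflect_vertex (a b c : ℤ × ℤ) :
    triangleArea a b (a + a - c) = -triangleArea a b c := by
  simp only [triangleArea_eq, Prod.fst_add, Prod.snd_add, Prod.fst_sub, Prod.snd_sub]; ring

theorem barycentric_triangleArea (a b c l : ℤ × ℤ) :
    Barycentric (triangleArea a b c) a b c l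
      (triangleArea l b c) (triangleArea a l c) (triangleArea a b l) := by
  constructor
  · simp only [triangleArea_eq]; ring
  · ext <;>
    · simp only [triangleArea_eq, Prod.fst_add, Prod.snd_add, Prod.smul_fst, Prod.smul_snd,
        smul_eq_mul]
      ring

theorem Barycentric.abs_eq_abs_triangleArea {D x y z : ℤ} {a b c l : ℤ × ℤ}
    (h : Barycentric D a b c l x y z) (hD : D ≠ 0) (harea : |triangleArea a b c| = D) :
    |x| = |triangleArea l b c| := by
  have hfst := congrArg Prod.fst h.smul
  have hsnd := congrArg Prod.snd h.smul
  simp only [Prod.fst_add, Prod.snd_add, Prod.smul_fst, Prod.smul_snd, smul_eq_mul] at hfst hsnd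
  have hmul : D * triangleArea l b c = x * triangleArea a b c := by
    simp only [triangleArea_eq]
    linear_combination (b.2 - c.2) * hfst + (c.1 - b.1) * hsnd
      + (b.2 * c.1 - b.1 * c.2) * h.sum
  have habs := congrArg abs hmul
  rw [abs_mul, abs_mul, harea, abs_of_nonneg (harea ▸ abs_nonneg _ : 0 ≤ D), mul_comm |x|] at habs
  exact (mul_left_cancel₀ hD habs).symm

/-- A triangle with vertices in `S` whose area has absolute value `D`, the smallest one that
triangles with two vertices in `S` and the third one in `T` can have. -/
structure MinimalTriangle (S T : Set (ℤ × ℤ)) (D : ℤ) (a b c : ℤ × ℤ) : Prop where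
  mem₁ : a ∈ S
  mem₂ : b ∈ S
  mem₃ : c ∈ S
  area : |triangleArea a b c| = D
  le_area : ∀ u ∈ S, ∀ v ∈ S, ∀ l ∈ T, triangleArea l u v ≠ 0 → D ≤ |triangleArea l u v|

namespace MinimalTriangle

variable {S T : Set (ℤ × ℤ)} {D : ℤ} {a b c : ℤ × ℤ}

theorem rotate (h : MinimalTriangle S T D a b c) : MinimalTriangle S T D b c a :=
  ⟨h.mem₂, h.mem₃, h.mem₁, by rw [triangleArea_rotate, h.area], h.le_area⟩

theorem swap (h : MinimalTriangle S T D a b c) : MinimalTriangle S T D a c b :=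
  ⟨h.mem₁, h.mem₃, h.mem₂, by rw [triangleArea_swap, abs_neg, h.area], h.le_area⟩

theorem reflect_midpoint (h : MinimalTriangle S T D a b c) (hd : b + c - a ∈ S) :
    MinimalTriangle S T D (b + c - a) b c :=
  ⟨hd, h.mem₂, h.mem₃, by rw [triangleArea_reflect_midpoint, abs_neg, h.area], h.le_area⟩

theorem reflect_vertex (h : MinimalTriangle S T D a b c) (hd : a + a - c ∈ S) :
    MinimalTriangle S T D a b (a + a - c) :=
  ⟨h.mem₁, h.mem₂, hd, by rw [triangleArea_reflect_vertex, abs_neg, h.area], h.le_area⟩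

theorem coordinate_gap (h : MinimalTriangle S T D a b c) (hD : 0 < D) {l : ℤ × ℤ} (hl : l ∈ T)
    {x y z : ℤ} (hbary : Barycentric D a b c l x y z) : x = 0 ∨ D ≤ x ∨ x ≤ -D := by
  rcases eq_or_ne x 0 with hx | hx
  · exact .inl hx
  · have habs := hbary.abs_eq_abs_triangleArea hD.ne' h.area
    have hle : D ≤ |x| := habs ▸ h.le_area b h.mem₂ c h.mem₃ l hl
      (abs_pos.1 (habs ▸ abs_pos.2 hx))
    exact .inr ((le_abs.1 hle).imp_right le_neg_of_le_neg)

end MinimalTriangle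

/-- The statement proved by descent on `|x| + |y| + |z|`: below the bound `n`, a point of `P` with
coordinates `x, y, z` in some minimal triangle belongs to `G` iff it belongs to `L`. -/
def DescentBelow (P G L : Set (ℤ × ℤ)) (D n : ℤ) : Prop :=
  ∀ ⦃a b c l : ℤ × ℤ⦄ ⦃x y z : ℤ⦄, MinimalTriangle (G ∩ L) (G ∪ L) D a b c → l ∈ P →
    Barycentric D a b c l x y z → |x| + |y| + |z| < n → (l ∈ G ↔ l ∈ L)

variable {P G L : Set (ℤ × ℤ)} {D x y z : ℤ} {a b c l : ℤ × ℤ}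

/- If `y < D` or `z < D`, translating `l` by an edge of the triangle brings it closer; otherwise `l`
has smaller coordinates in the triangle obtained by reflecting `a` in the midpoint of `b, c`. -/
theorem DescentBelow.mem_iff_of_one_neg (hP : LatticeConvex P) (hG : TwoClosed P G)
    (hL : TwoClosed Set.univ L) (hD : 0 < D) (hT : MinimalTriangle (G ∩ L) (G ∪ L) D a b c)
    (hl : l ∈ P) (hbary : Barycentric D a b c l x y z)
    (hdesc : DescentBelow P G L D (|x| + |y| + |z|)) (hx : x ≤ -D) (hy : 0 ≤ y) (hz : 0 ≤ z) :
    l ∈ G ↔ l ∈ L := by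
  have shift_of_lt : ∀ {b c : ℤ × ℤ} {y z : ℤ}, MinimalTriangle (G ∩ L) (G ∪ L) D a b c →
      Barycentric D a b c l x y z → DescentBelow P G L D (|x| + |y| + |z|) →
      0 ≤ y → y < D → (l ∈ G ↔ l ∈ L) := by
    intro b c y z hT hbary hdesc hy hyD
    have hsum := hbary.sum
    have hm : l + a - c ∈ P := by
      refine hP (N := -x) (k := -x - D) (l := y) (m := D - y) (by linarith) (by linarith) hy
        (by linarith) (by ring) hl (hG.subset hT.mem₂.1) (hG.subset hT.mem₃.1) ?_
      linear_combination (exp := 1) hbary.smul + hsum • c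
    rw [← hG.add_sub_mem_iff hT.mem₁.1 hT.mem₃.1 hl hm,
      ← hL.add_sub_mem_iff hT.mem₁.2 hT.mem₃.2 trivial trivial]
    refine hdesc hT hm hbary.shift ?_
    rw [abs_of_nonpos (by linarith : x + D ≤ 0), abs_of_nonpos (by linarith : x ≤ 0),
      abs_of_nonneg (by linarith : 0 ≤ z - D), abs_of_nonneg (by linarith : 0 ≤ z)]
    linarith
  rcases lt_or_ge y D with hyD | hyD
  · exact shift_of_lt hT hbary hdesc hy hyD
  rcases lt_or_ge z D with hzD | hzD
  · refine shift_of_lt hT.swap hbary.swap ?_ hz hzD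
    rwa [add_right_comm]
  have hsum := hbary.sum
  have hd : b + c - a ∈ P := by
    refine hP (N := -x) (k := D) (l := -x - y) (m := y - D) (by linarith) hD.le (by linarith)
      (by linarith) (by ring) hl (hG.subset hT.mem₂.1) (hG.subset hT.mem₃.1) ?_
    linear_combination (exp := 1) (-1 : ℤ) • hbary.smul - hsum • c
  have hT' := hT.reflect_midpoint ⟨hG.add_sub_mem hT.mem₂.1 hT.mem₃.1 hT.mem₁.1 hd,
    hL.add_sub_mem hT.mem₂.2 hT.mem₃.2 hT.mem₁.2 trivial⟩
  refine hdesc hT' hl hbary.reflect_midpoint ?_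
  rw [abs_neg, abs_of_nonpos (by linarith : y + x ≤ 0), abs_of_nonpos (by linarith : z + x ≤ 0),
    abs_of_nonneg hy, abs_of_nonneg hz]
  linarith

theorem DescentBelow.mem_iff_of_two_neg (hP : LatticeConvex P) (hG : TwoClosed P G)
    (hL : TwoClosed Set.univ L) (hD : 0 < D) (hT : MinimalTriangle (G ∩ L) (G ∪ L) D a b c)
    (hl : l ∈ P) (hbary : Barycentric D a b c l x y z)
    (hdesc : DescentBelow P G L D (|x| + |y| + |z|)) (hy : y ≤ -D) (hz : z ≤ -D) :
    l ∈ G ↔ l ∈ L := by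
  wlog hzy : z ≤ y generalizing b c y z
  · exact this hT.swap hbary.swap (by rwa [add_right_comm]) hz hy (le_of_not_ge hzy)
  have hsum := hbary.sum
  rw [abs_of_nonneg (by linarith : 0 ≤ x), abs_of_nonpos (by linarith : y ≤ 0),
    abs_of_nonpos (by linarith : z ≤ 0)] at hdesc
  rcases le_or_gt D (y - z) with hfar | hnear
  · have hd : a + a - c ∈ P := by
      refine hP (N := -z) (k := D) (l := -y) (m := y - z - D) (by linarith) hD.le (by linarith)
        (by linarith) (by ring) hl (hG.subset hT.mem₂.1) (hG.subset hT.mem₁.1) ?_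
      linear_combination (exp := 1) (-1 : ℤ) • hbary.smul - hsum • a
    have hT' := hT.reflect_vertex ⟨hG.add_sub_mem hT.mem₁.1 hT.mem₁.1 hT.mem₃.1 hd,
      hL.add_sub_mem hT.mem₁.2 hT.mem₁.2 hT.mem₃.2 trivial⟩
    refine hdesc hT' hl hbary.reflect_vertex ?_
    rw [abs_of_nonpos (by linarith : x + 2 * z ≤ 0), abs_of_nonpos (by linarith : y ≤ 0),
      abs_of_nonneg (by linarith : 0 ≤ -z)]
    linarith
  · have hm : l + b + c - a - a ∈ P := by
      refine hP (N := -z) (k := -z - D) (l := D + z - y) (m := y - z) (by linarith) (by linarith)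
        (by linarith) (by linarith) (by ring) hl (hG.subset hT.mem₁.1) (hG.subset hT.mem₂.1) ?_
      linear_combination (exp := 1) hbary.smul + hsum • a
    rw [← hG.add_add_sub_sub_mem_iff hT.mem₂.1 hT.mem₃.1 hT.mem₁.1 hT.mem₁.1 hl hm,
      ← hL.add_add_sub_sub_mem_iff hT.mem₂.2 hT.mem₃.2 hT.mem₁.2 hT.mem₁.2 trivial trivial]
    refine hdesc hT hm hbary.shift_two ?_
    rw [abs_of_nonneg (by linarith : 0 ≤ x - 2 * D), abs_of_nonpos (by linarith : y + D ≤ 0),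
      abs_of_nonpos (by linarith : z + D ≤ 0)]
    linarith

theorem Barycentric.eq_vertex (hD : D ≠ 0) (hbary : Barycentric D a b c l D 0 0) : l = a :=
  smul_right_injective _ hD (by simpa using hbary.smul)

theorem descentBelow (hP : LatticeConvex P) (hG : TwoClosed P G) (hL : TwoClosed Set.univ L)
    (hD : 0 < D) (n : ℕ) : DescentBelow P G L D n := by
  induction n with
  | zero =>
    intro a b c l x y z _ _ _ hneg
    exact absurd hneg (not_lt.2 (by push_cast; positivity))
  | succ n ih =>
    intro a b c l x y z hT hl hbary hlt
    have hdesc : DescentBelow P G L D (|x| + |y| + |z|) := fun _ _ _ _ _ _ _ hT' hl' hb' hlt' ↦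
      ih hT' hl' hb' (by push_cast at hlt; linarith)
    have hdesc₁ : DescentBelow P G L D (|y| + |z| + |x|) := by rwa [add_rotate] at hdesc
    have hdesc₂ : DescentBelow P G L D (|z| + |x| + |y|) := by rwa [add_rotate] at hdesc₁
    by_cases hlT : l ∈ G ∪ L
    swap
    · exact iff_of_false (fun h ↦ hlT (.inl h)) (fun h ↦ hlT (.inr h))
    have hx := hT.coordinate_gap hD hlT hbary
    have hy := hT.rotate.coordinate_gap hD hlT hbary.rotate
    have hz := hT.rotate.rotate.coordinate_gap hD hlT hbary.rotate.rotate
    have hsum := hbary.sum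
    have one_neg := @DescentBelow.mem_iff_of_one_neg P G L D
    have two_neg := @DescentBelow.mem_iff_of_two_neg P G L D
    by_cases hxneg : x ≤ -D <;> by_cases hyneg : y ≤ -D <;> by_cases hzneg : z ≤ -D
    · linarith
    · exact two_neg hP hG hL hD hT.rotate.rotate hl hbary.rotate.rotate hdesc₂ hxneg hyneg
    · exact two_neg hP hG hL hD hT.rotate hl hbary.rotate hdesc₁ hzneg hxneg
    · exact one_neg hP hG hL hD hT hl hbary hdesc hxneg (by lia) (by lia)
    · exact two_neg hP hG hL hD hT hl hbary hdesc hyneg hzneg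
    · exact one_neg hP hG hL hD hT.rotate hl hbary.rotate hdesc₁ hyneg (by lia) (by lia)
    · exact one_neg hP hG hL hD hT.rotate.rotate hl hbary.rotate.rotate hdesc₂ hzneg (by lia)
        (by lia)
    · have hvertex : (x = D ∧ y = 0 ∧ z = 0) ∨ (y = D ∧ z = 0 ∧ x = 0) ∨
          (z = D ∧ x = 0 ∧ y = 0) := by lia
      rcases hvertex with ⟨rfl, rfl, rfl⟩ | ⟨rfl, rfl, rfl⟩ | ⟨rfl, rfl, rfl⟩
      · rw [hbary.eq_vertex hD.ne']; exact iff_of_true hT.mem₁.1 hT.mem₁.2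
      · rw [hbary.rotate.eq_vertex hD.ne']; exact iff_of_true hT.mem₂.1 hT.mem₂.2
      · rw [hbary.rotate.rotate.eq_vertex hD.ne']; exact iff_of_true hT.mem₃.1 hT.mem₃.2

theorem exists_minimal_triangleArea {g : ℤ × ℤ} (hg : g ∈ G)
    (hspan : Submodule.span ℤ ((· - g) '' G) = ⊤) :
    ∃ a ∈ G, ∃ b ∈ G, ∃ c ∈ G, triangleArea a b c ≠ 0 ∧ ∀ u ∈ G, ∀ v ∈ G, ∀ l ∈ G,
      triangleArea l u v ≠ 0 → |triangleArea a b c| ≤ |triangleArea l u v| := by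
  set areas : Set ℕ :=
    {n | ∃ a ∈ G, ∃ b ∈ G, ∃ c ∈ G, triangleArea a b c ≠ 0 ∧ (triangleArea a b c).natAbs = n}
  have hne : areas.Nonempty := by
    obtain ⟨_, ⟨u, hu, rfl⟩, _, ⟨v, hv, rfl⟩, huv⟩ := exists_areaForm_ne_zero_of_span_eq_top hspan
    exact ⟨_, g, hg, u, hu, v, hv, huv, rfl⟩
  obtain ⟨a, ha, b, hb, c, hc, habc, hmin⟩ := Nat.sInf_mem hne
  refine ⟨a, ha, b, hb, c, hc, habc, fun u hu v hv l hl hluv ↦ ?_⟩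
  rw [Int.abs_eq_natAbs, Int.abs_eq_natAbs, hmin]
  exact_mod_cast Nat.sInf_le (show _ ∈ areas from ⟨l, hl, u, hu, v, hv, hluv, rfl⟩)

/- With `L` the lattice spanned by a triangle of minimal area in `G`, the descent gives
`G = L ∩ P`; then `L` contains `G`, so it is everything. -/
theorem TwoClosed.eq_of_span_eq_top (hP : LatticeConvex P) (hG : TwoClosed P G) {g : ℤ × ℤ}
    (hg : g ∈ G) (hspan : Submodule.span ℤ ((· - g) '' G) = ⊤) : G = P := by
  obtain ⟨a, ha, b, hb, c, hc, habc, hmin⟩ := exists_minimal_triangleArea hg hspan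
  set S := Submodule.span ℤ {b - a, c - a}
  set L : Set (ℤ × ℤ) := {x | x - a ∈ S}
  have hLarea : ∀ u ∈ L, ∀ v ∈ L, ∀ l ∈ L, triangleArea a b c ∣ triangleArea l u v := by
    refine fun u hu v hv l hl ↦ areaForm_dvd_of_mem_span_pair ?_ ?_
    · simpa using S.sub_mem hu hl
    · simpa using S.sub_mem hv hl
  have hT : MinimalTriangle (G ∩ L) (G ∪ L) |triangleArea a b c| a b c := by
    refine ⟨⟨ha, ?_⟩, ⟨hb, Submodule.subset_span (by simp)⟩,
      ⟨hc, Submodule.subset_span (by simp)⟩, rfl, fun u hu v hv l hl hluv ↦ ?_⟩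
    · simp [L]
    · rcases hl with hl | hl
      · exact hmin u hu.1 v hv.1 l hl hluv
      · exact Int.le_of_dvd (abs_pos.2 hluv) (abs_dvd_abs _ _ |>.2 (hLarea u hu.2 v hv.2 l hl))
  have hiff : ∀ l ∈ P, (l ∈ G ↔ l ∈ L) := by
    intro l hl
    have hcoord : ∃ x y z, Barycentric |triangleArea a b c| a b c l x y z := by
      rcases abs_choice (triangleArea a b c) with habs | habs <;> rw [habs]
      · exact ⟨_, _, _, barycentric_triangleArea a b c l⟩
      · rw [← triangleArea_swap]
        exact ⟨_, _, _, (barycentric_triangleArea a c b l).swap⟩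
    obtain ⟨x, y, z, hbary⟩ := hcoord
    refine descentBelow hP hG (.translate_submodule a S) (abs_pos.2 habc)
      (x.natAbs + y.natAbs + z.natAbs + 1) hT hl hbary ?_
    push_cast
    simp
  have hGL : ∀ x ∈ G, x ∈ L := fun x hx ↦ (hiff x (hG.subset hx)).1 hx
  have hS : S = ⊤ := by
    rw [eq_top_iff, ← hspan, Submodule.span_le]
    rintro _ ⟨x, hx, rfl⟩
    simpa using S.sub_mem (hGL x hx) (hGL g hg)
  exact hG.subset.antisymm fun l hl ↦ (hiff l hl).2 (by simp [L, hS])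

end Planar

section PlanarSets

variable {d : ℕ}

theorem latticeConvex_NN (d : ℕ) : LatticeConvex (NN d) := by
  intro N k l m u v w x hN hk hl hm _ hu hv hw hx j
  have hxj := congrFun hx j
  simp only [Pi.add_apply, Pi.smul_apply, smul_eq_mul] at hxj
  refine nonneg_of_mul_nonneg_right (hxj ▸ ?_ : 0 ≤ N * x j) hN
  have := hu j
  have := hv j
  have := hw j
  positivity

theorem exists_injective_range_eq_of_finrank_eq_two {H : Submodule ℤ (Fin d → ℤ)}
    (hH : Module.finrank ℤ H = 2) :
    ∃ f : ℤ × ℤ →ₗ[ℤ] (Fin d → ℤ), Function.Injective f ∧ LinearMap.range f = H := by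
  let e : (ℤ × ℤ) ≃ₗ[ℤ] H :=
    (LinearEquiv.finTwoArrow ℤ ℤ).symm ≪≫ₗ (Module.finBasisOfFinrankEq ℤ H hH).equivFun.symm
  exact ⟨H.subtype ∘ₗ e.toLinearMap, H.injective_subtype.comp e.injective, by
    rw [LinearMap.range_comp, LinearEquiv.range, Submodule.map_top, Submodule.range_subtype]⟩

theorem TwoClosed.exists_isCoset_of_hasDim_two {Γ : Set (Fin d → ℤ)} (hΓ : TwoClosed (NN d) Γ)
    (hne : Γ.Nonempty) (hdim : HasDim Γ 2) : ∃ Λ, IsCoset Λ ∧ Γ = Λ ∩ NN d := by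
  obtain ⟨g, hg⟩ := hne
  obtain ⟨f, hf, hrange⟩ := exists_injective_range_eq_of_finrank_eq_two (hdim g hg)
  have hsub : ∀ γ ∈ Γ, ∃ x, f x = γ - g := fun γ hγ ↦
    hrange.ge (Submodule.subset_span ⟨γ, hγ, rfl⟩)
  have hspan : Submodule.span ℤ ((· - 0) '' ((fun x ↦ g + f x) ⁻¹' Γ)) = ⊤ := by
    refine Submodule.map_injective_of_injective hf ?_
    rw [Submodule.map_span, Submodule.map_top, hrange]
    congr 1
    ext y
    simp only [sub_zero, Set.image_id', Set.mem_image, Set.mem_preimage]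
    constructor
    · rintro ⟨x, hx, rfl⟩
      exact ⟨_, hx, add_sub_cancel_left g _⟩
    · rintro ⟨γ, hγ, rfl⟩
      obtain ⟨x, hx⟩ := hsub γ hγ
      exact ⟨x, by rwa [hx, add_sub_cancel], hx⟩
  have heq := (hΓ.preimage g f).eq_of_span_eq_top ((latticeConvex_NN d).preimage g f)
    (g := 0) (by simpa) hspan
  refine ⟨_, ⟨g, (LinearMap.range f).toAddSubgroup, rfl⟩,
    Set.Subset.antisymm (fun γ hγ ↦ ⟨⟨γ - g, ?_, add_sub_cancel g γ⟩, hΓ.subset hγ⟩) ?_⟩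
  · exact hsub γ hγ
  · rintro _ ⟨⟨_, ⟨x, rfl⟩, rfl⟩, hNN⟩
    exact heq.ge hNN

end PlanarSets

section Periods

variable {d : ℕ} {Γ : Set (Fin d → ℤ)} {v w : Fin d → ℤ}

/-- The monoid of nonnegative periods of `Γ`. -/
def nonnegPeriods (Γ : Set (Fin d → ℤ)) : AddSubmonoid (Fin d → ℤ) where
  carrier := {v | v ∈ NN d ∧ ∀ γ ∈ Γ, γ + v ∈ Γ}
  zero_mem' := ⟨fun _ ↦ le_rfl, fun γ hγ ↦ by rwa [add_zero]⟩
  add_mem' hv hw := ⟨fun j ↦ add_nonneg (hv.1 j) (hw.1 j), fun γ hγ ↦ by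
    rw [← add_assoc]; exact hw.2 _ (hv.2 γ hγ)⟩

theorem add_nsmul_mem_of_mem_nonnegPeriods (hv : v ∈ nonnegPeriods Γ) {γ : Fin d → ℤ} (hγ : γ ∈ Γ)
    (M : ℕ) : γ + M • v ∈ Γ :=
  (nsmul_mem hv M).2 γ hγ

theorem exists_nonneg_add_nsmul (hv : v ∈ NN d) (hw : ∀ j, v j = 0 → 0 ≤ w j) :
    ∃ M : ℕ, w + M • v ∈ NN d ∧ ∀ j, v j ≠ 0 → 0 < (w + M • v) j := by
  have hpos : ∀ j, v j ≠ 0 → 0 < (w + (∑ i, (w i).natAbs + 1) • v) j := by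
    intro j hj
    have hle : (w j).natAbs ≤ ∑ i, (w i).natAbs :=
      Finset.single_le_sum (f := fun i ↦ (w i).natAbs) (fun _ _ ↦ Nat.zero_le _) (Finset.mem_univ j)
    have hvj : 1 ≤ v j := lt_of_le_of_ne (hv j) hj.symm
    have hwj : |w j| ≤ ((∑ i, (w i).natAbs : ℕ) : ℤ) := by
      rw [Int.abs_eq_natAbs]; exact_mod_cast hle
    rw [Pi.add_apply, Pi.smul_apply, nsmul_eq_mul, Nat.cast_succ]
    nlinarith [neg_abs_le (w j), abs_nonneg (w j)]
  refine ⟨_, fun j ↦ ?_, hpos⟩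
  by_cases hj : v j = 0
  · simpa [hj] using hw j hj
  · exact (hpos j hj).le

theorem TwoClosed.exists_add_nsmul_mem (hΓ : TwoClosed (NN d) Γ) (hv : v ∈ nonnegPeriods Γ)
    (hpos : ∀ j, v j ≠ 0) {g h γ : Fin d → ℤ} (hg : g ∈ Γ)
    (hh : h ∈ AddSubgroup.closure ((· - g) '' Γ)) (hγ : γ ∈ Γ) :
    ∃ M : ℕ, γ + h + M • v ∈ Γ := by
  have exists_mem_NN (w : Fin d → ℤ) : ∃ M : ℕ, w + M • v ∈ NN d :=
    (exists_nonneg_add_nsmul hv.1 fun j hj ↦ absurd hj (hpos j)).imp fun _ h ↦ h.1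
  induction hh using AddSubgroup.closure_induction generalizing γ with
  | mem h hh =>
    obtain ⟨α, hα, rfl⟩ := hh
    obtain ⟨M, hM⟩ := exists_mem_NN (γ + (α - g))
    have heq : γ + (α - g) + M • v = γ + (α + M • v) - g := by abel
    refine ⟨M, ?_⟩
    rw [heq] at hM ⊢
    exact hΓ.add_sub_mem hγ (add_nsmul_mem_of_mem_nonnegPeriods hv hα M) hg hM
  | zero => exact ⟨0, by simpa⟩
  | add h₁ h₂ _ _ ih₁ ih₂ =>
    obtain ⟨M₁, hM₁⟩ := ih₁ hγ
    obtain ⟨M₂, hM₂⟩ := ih₂ hM₁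
    refine ⟨M₁ + M₂, ?_⟩
    convert hM₂ using 1
    rw [add_nsmul]; abel
  | neg h _ ih =>
    obtain ⟨M, hM⟩ := ih hγ
    obtain ⟨N, hN⟩ := exists_mem_NN (γ + -h)
    have heq : γ + -h + N • v = γ + (γ + (N + M) • v) - (γ + h + M • v) := by
      rw [add_nsmul]; abel
    refine ⟨N, ?_⟩
    rw [heq] at hN ⊢
    exact hΓ.add_sub_mem hγ (add_nsmul_mem_of_mem_nonnegPeriods hv hγ _) hM hN

theorem TwoClosed.exists_isCoset_of_nonnegPeriods (hΓ : TwoClosed (NN d) Γ) (hne : Γ.Nonempty)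
    (hv : v ∈ nonnegPeriods Γ) (hpos : ∀ j, v j ≠ 0) : ∃ Λ, IsCoset Λ ∧ Γ = Λ ∩ NN d := by
  obtain ⟨g, hg⟩ := hne
  refine ⟨_, ⟨g, AddSubgroup.closure ((· - g) '' Γ), rfl⟩,
    Set.Subset.antisymm (fun γ hγ ↦ ⟨⟨γ - g, ?_, add_sub_cancel g γ⟩, hΓ.subset hγ⟩) ?_⟩
  · exact AddSubgroup.subset_closure ⟨γ, hγ, rfl⟩
  · rintro _ ⟨⟨h, hh, rfl⟩, hNN⟩
    obtain ⟨M, hM⟩ := hΓ.exists_add_nsmul_mem hv hpos hg hh hg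
    have heq : g + h = (g + h + M • v) + g - (g + M • v) := by abel
    dsimp only at hNN ⊢
    rw [heq] at hNN ⊢
    exact hΓ.add_sub_mem hM hg (add_nsmul_mem_of_mem_nonnegPeriods hv hg M) hNN

end Periods

section CoordinateProjection

variable {d : ℕ} {Γ : Set (Fin d → ℤ)} {v : Fin d → ℤ}

/-- The projection of `ℤ^d` onto the coordinates in `I`, the others being replaced by `0`. -/
def coordProj (I : Set (Fin d)) : (Fin d → ℤ) →ₗ[ℤ] (Fin d → ℤ) where
  toFun x := I.indicator x
  map_add' x y := Set.indicator_add I x y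
  map_smul' c x := Set.indicator_const_smul I c x

theorem coordProj_of_mem {I : Set (Fin d)} {j : Fin d} (hj : j ∈ I) (x : Fin d → ℤ) :
    coordProj I x j = x j := Set.indicator_of_mem hj x

theorem coordProj_of_notMem {I : Set (Fin d)} {j : Fin d} (hj : j ∉ I) (x : Fin d → ℤ) :
    coordProj I x j = 0 := Set.indicator_of_notMem hj x

theorem coordProj_mem_NN {x : Fin d → ℤ} (hx : x ∈ NN d) (I : Set (Fin d)) :
    coordProj I x ∈ NN d := fun j ↦ Set.indicator_nonneg (fun i _ ↦ hx i) j

theorem coordProj_zeros (v : Fin d → ℤ) : coordProj {j | v j = 0} v = 0 :=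
  Set.indicator_eq_zero'.2 (Set.disjoint_left.2 fun _ hj hj' ↦ hj hj')

theorem exists_nonneg_add_nsmul_of_coordProj {w : Fin d → ℤ} (hv : v ∈ NN d)
    (hw : coordProj {j | v j = 0} w ∈ NN d) :
    ∃ M : ℕ, w + M • v ∈ NN d ∧ ∀ j, v j ≠ 0 → 0 < (w + M • v) j :=
  exists_nonneg_add_nsmul hv fun j hj ↦ (hw j).trans_eq (coordProj_of_mem (by exact hj) w)

theorem TwoClosed.image_coordProj (hΓ : TwoClosed (NN d) Γ) (hv : v ∈ nonnegPeriods Γ) :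
    TwoClosed (NN d) (coordProj {j | v j = 0} '' Γ) where
  subset := by
    rintro _ ⟨x, hx, rfl⟩
    exact coordProj_mem_NN (hΓ.subset hx) _
  mem := by
    rintro _ _ _ _ _ ⟨a, ha, rfl⟩ ⟨b, hb, rfl⟩ ⟨c, hc, rfl⟩ ⟨u, hu, rfl⟩ ⟨w, hw, rfl⟩ h
    rw [← map_add, ← map_add, ← map_sub, ← map_sub] at h ⊢
    obtain ⟨M, hM, -⟩ := exists_nonneg_add_nsmul_of_coordProj hv.1 h
    refine ⟨a + b + c - u - w + M • v, ?_, by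
      rw [map_add, map_nsmul, coordProj_zeros, smul_zero, add_zero]⟩
    have heq : a + b + c - u - w + M • v = (a + M • v) + b + c - u - w := by abel
    rw [heq] at hM ⊢
    exact hΓ.mem (add_nsmul_mem_of_mem_nonnegPeriods hv ha M) hb hc hu hw hM

/- If `x ≤ y` and `x ≠ y` after projecting, then `y - x + M • v` is a period with fewer zeros. -/
theorem TwoClosed.isAntichain_image_coordProj (hΓ : TwoClosed (NN d) Γ) (hv : v ∈ nonnegPeriods Γ)
    (hmin : ∀ w ∈ nonnegPeriods Γ, {j | w j = 0} ⊆ {j | v j = 0} →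
      {j | v j = 0} ⊆ {j | w j = 0}) :
    IsAntichain (· ≤ ·) (coordProj {j | v j = 0} '' Γ) := by
  rintro _ ⟨x, hx, rfl⟩ _ ⟨y, hy, rfl⟩ hne hle
  obtain ⟨M, hNN, hpos⟩ := exists_nonneg_add_nsmul_of_coordProj (w := y - x) hv.1 fun j ↦ by
    rw [map_sub]; exact sub_nonneg.2 (hle j)
  have hperiod : y - x + M • v ∈ nonnegPeriods Γ := by
    refine ⟨hNN, fun γ hγ ↦ ?_⟩
    have heq : γ + (y - x + M • v) = γ + (y + M • v) - x := by abel
    have hmem : γ + (y - x + M • v) ∈ NN d := fun j ↦ add_nonneg (hΓ.subset hγ j) (hNN j)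
    rw [heq] at hmem ⊢
    exact hΓ.add_sub_mem hγ (add_nsmul_mem_of_mem_nonnegPeriods hv hy M) hx hmem
  have hzero := hmin _ hperiod fun j hj ↦ by_contra fun hvj ↦ (hpos j hvj).ne' hj
  refine hne (funext fun j ↦ ?_)
  by_cases hj : v j = 0
  · have hyx : (y - x + M • v) j = 0 := hzero hj
    simp only [Pi.add_apply, Pi.sub_apply, Pi.smul_apply, hj, smul_zero, add_zero] at hyx
    rw [coordProj_of_mem hj, coordProj_of_mem hj, sub_eq_zero.1 hyx]
  · rw [coordProj_of_notMem hj, coordProj_of_notMem hj]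

theorem finite_of_isAntichain_of_subset_NN {G : Set (Fin d → ℤ)} (hG : IsAntichain (· ≤ ·) G)
    (hsub : G ⊆ NN d) : G.Finite := by
  have hmono : Monotone fun (n : Fin d → ℕ) j ↦ (n j : ℤ) := fun _ _ h j ↦ Int.ofNat_le.2 (h j)
  have hpwo := (Set.isPWO_of_wellQuasiOrderedLE Set.univ).image_of_monotone hmono
  exact hG.finite_of_partiallyWellOrderedOn (hpwo.mono fun x hx ↦
    ⟨fun j ↦ (x j).toNat, trivial, funext fun j ↦ Int.toNat_of_nonneg (hsub hx j)⟩)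

/- If the zero set of a period is minimal and still nonempty, the projection onto these coordinates
is an antichain, hence finite. -/
theorem TwoClosed.exists_isCoset_or_finite_coordProj (hΓ : TwoClosed (NN d) Γ)
    (hne : Γ.Nonempty) :
    (∃ Λ, IsCoset Λ ∧ Γ = Λ ∩ NN d) ∨ ∃ I : Set (Fin d), I.Nonempty ∧
      TwoClosed (NN d) (coordProj I '' Γ) ∧ (coordProj I '' Γ).Finite := by
  obtain ⟨v, hv, hmin⟩ := exists_minimalFor_of_wellFoundedLT (· ∈ nonnegPeriods Γ)
    (fun v ↦ {j | v j = 0}) ⟨0, zero_mem _⟩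
  by_cases hpos : ∀ j, v j ≠ 0
  · exact .inl (hΓ.exists_isCoset_of_nonnegPeriods hne hv hpos)
  · push Not at hpos
    have hproj := hΓ.image_coordProj hv
    exact .inr ⟨_, hpos, hproj, finite_of_isAntichain_of_subset_NN
      (hΓ.isAntichain_image_coordProj hv fun w hw ↦ hmin hw) hproj.subset⟩

end CoordinateProjection

section ExtremalTriple

theorem exists_isExtreme_forall_apply_le {ι : Type*} [Finite ι] {G : Set (ι → ℤ)}
    (hfin : G.Finite) (hne : G.Nonempty) (i : ι) :
    ∃ q ∈ G, (∀ x ∈ G, x i ≤ q i) ∧ ∀ x ∈ G, ∀ y ∈ G, x + y = q + q → x = q := by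
  cases nonempty_fintype ι
  obtain ⟨r, hr, hrmax⟩ := G.exists_max_image (· i) hfin hne
  obtain ⟨q, ⟨hq, hqi⟩, hqmax⟩ := Set.exists_max_image {x ∈ G | x i = r i} (fun x ↦ x ⬝ᵥ x)
    (hfin.subset (Set.sep_subset _ _)) ⟨r, hr, rfl⟩
  refine ⟨q, hq, fun x hx ↦ hqi ▸ hrmax x hx, fun x hx y hy hxy ↦ ?_⟩
  have hxyi : x i + y i = q i + q i := congrFun hxy i
  have hxq : x ⬝ᵥ x ≤ q ⬝ᵥ q := hqmax x ⟨hx, by linarith [hrmax x hx, hrmax y hy]⟩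
  have hyq : y ⬝ᵥ y ≤ q ⬝ᵥ q := hqmax y ⟨hy, by linarith [hrmax x hx, hrmax y hy]⟩
  have parallelogram : (x - q) ⬝ᵥ (x - q) + (x - q) ⬝ᵥ (x - q)
      = x ⬝ᵥ x + y ⬝ᵥ y - q ⬝ᵥ q - q ⬝ᵥ q := by
    rw [eq_sub_of_add_eq' hxy]
    simp only [dotProduct_sub, sub_dotProduct, dotProduct_add, add_dotProduct, dotProduct_comm q x]
    ring
  have hzero : (x - q) ⬝ᵥ (x - q) = 0 :=
    le_antisymm (by linarith) (Finset.sum_nonneg fun j _ ↦ mul_self_nonneg _)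
  exact sub_eq_zero.1 (dotProduct_self_eq_zero.1 hzero)

theorem exists_ne_zero_dotProduct_eq {ι : Type*} [Fintype ι] {I : Set ι} {i₀ : ι} (hi₀ : i₀ ∈ I)
    (q : ι → ι → ℤ) :
    ∃ l : ι → ℤ, l ≠ 0 ∧ (∀ i ∉ I, l i = 0) ∧ ∀ i ∈ I, l ⬝ᵥ q i = l ⬝ᵥ q i₀ := by
  let A : Matrix ι ι ℤ := fun i ↦ if i ∈ I then q i - q i₀ else Pi.single i 1
  have hdet : A.det = 0 := Matrix.det_eq_zero_of_row_eq_zero i₀ fun j ↦ by simp [A, hi₀]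
  obtain ⟨l, hl, hAl⟩ := Matrix.exists_mulVec_eq_zero_iff.2 hdet
  refine ⟨l, hl, fun i hi ↦ ?_, fun i hi ↦ ?_⟩
  · simpa [A, hi, Matrix.mulVec] using congrFun hAl i
  · have hrow : A i ⬝ᵥ l = 0 := congrFun hAl i
    rwa [show A i = q i - q i₀ from if_pos hi, dotProduct_comm, dotProduct_sub, sub_eq_zero] at hrow

variable {a b c d : Fin 3 → ℤ}

theorem orthant_alternatives (ha : a ∈ NN 3) (hb : b ∈ NN 3) (hc : c ∈ NN 3) (hd : d ∈ NN 3)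
    (h : ∀ m, d m ≤ a m ∨ d m ≤ b m ∨ d m ≤ c m) :
    a + b - d ∈ NN 3 ∨ a + c - d ∈ NN 3 ∨ b + c - d ∈ NN 3 ∨ a + b + c - d - d ∈ NN 3 ∨
      d + d - a ∈ NN 3 ∨ d + d - b ∈ NN 3 ∨ d + d - c ∈ NN 3 := by
  have nonneg (m : Fin 3) : 0 ≤ a m ∧ 0 ≤ b m ∧ 0 ≤ c m ∧ 0 ≤ d m := ⟨ha m, hb m, hc m, hd m⟩
  by_contra! hout
  simp only [NN, Set.mem_ofPred_eq, not_forall, not_le, Pi.add_apply, Pi.sub_apply] at hout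
  obtain ⟨⟨k, hk⟩, ⟨j, hj⟩, ⟨i, hi⟩, ⟨n, hn⟩, ⟨m₁, h₁⟩, ⟨m₂, h₂⟩, ⟨m₃, h₃⟩⟩ := hout
  have hkj : k ≠ j := by rintro rfl; grind
  have hki : k ≠ i := by rintro rfl; grind
  have hji : j ≠ i := by rintro rfl; grind
  have hcov (m : Fin 3) : m = i ∨ m = j ∨ m = k := by lia
  have bounds_i := And.intro (nonneg i) (h i)
  have bounds_j := And.intro (nonneg j) (h j)
  have bounds_k := And.intro (nonneg k) (h k)
  rcases hcov n with rfl | rfl | rfl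
  · rcases hcov m₁ with rfl | rfl | rfl <;> lia
  · rcases hcov m₂ with rfl | rfl | rfl <;> lia
  · rcases hcov m₃ with rfl | rfl | rfl <;> lia

theorem TwoClosed.orthant_alternatives {G : Set (Fin 3 → ℤ)} (hG : TwoClosed (NN 3) G)
    (ha : a ∈ G) (hb : b ∈ G) (hc : c ∈ G) (hd : d ∈ G)
    (h : ∀ m, d m ≤ a m ∨ d m ≤ b m ∨ d m ≤ c m) :
    a + b - d ∈ G ∨ a + c - d ∈ G ∨ b + c - d ∈ G ∨ a + b + c - d - d ∈ G ∨
      d + d - a ∈ G ∨ d + d - b ∈ G ∨ d + d - c ∈ G :=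
  (_root_.orthant_alternatives (hG.subset ha) (hG.subset hb) (hG.subset hc) (hG.subset hd) h).imp
    (hG.add_sub_mem ha hb hd) <| .imp (hG.add_sub_mem ha hc hd) <| .imp (hG.add_sub_mem hb hc hd) <|
    .imp (hG.mem ha hb hc hd hd) <| .imp (hG.add_sub_mem hd hd ha) <|
    .imp (hG.add_sub_mem hd hd hb) (hG.add_sub_mem hd hd hc)

/-- Points `p 0, p 1, p 2` of `G` which are extreme, maximize one coordinate each, and on which the
functional `φ` has the common value `c`; on `G` it deviates from `c` by at most `H > 0`. In the
finite case we show that the deviation `H` cannot be attained. -/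
structure ExtremalTriple (G : Set (Fin 3 → ℤ)) (p : Fin 3 → Fin 3 → ℤ)
    (φ : (Fin 3 → ℤ) →ₗ[ℤ] ℤ) (c H : ℤ) : Prop where
  closed : TwoClosed (NN 3) G
  mem : ∀ i, p i ∈ G
  apply_le : ∀ i, ∀ x ∈ G, x i ≤ p i i
  extreme : ∀ i, ∀ x ∈ G, ∀ y ∈ G, x + y = p i + p i → x = p i
  level : ∀ i, φ (p i) = c
  abs_le : ∀ x ∈ G, |φ x - c| ≤ H
  pos : 0 < H

namespace ExtremalTriple

variable {G : Set (Fin 3 → ℤ)} {p : Fin 3 → Fin 3 → ℤ} {φ : (Fin 3 → ℤ) →ₗ[ℤ] ℤ} {c H : ℤ}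
  {i j k : Fin 3} {d e u w x : Fin 3 → ℤ}

theorem notMem (T : ExtremalTriple G p φ c H) (hd : |φ d - c| = H) (n : ℤ) (hn : 1 < |n|)
    (hx : φ x - c = n * (φ d - c)) : x ∉ G := by
  intro hxG
  have hle := T.abs_le x hxG
  rw [hx, abs_mul, hd] at hle
  nlinarith [T.pos]

theorem false_of_add_eq (T : ExtremalTriple G p φ c H) (hd : d ∈ G) (hdH : |φ d - c| = H)
    (he : e ∈ G) (h : d + e = p i + p i) : False := by
  have hpos := T.pos
  rw [← hdH, T.extreme i d hd e he h, T.level, sub_self, abs_zero] at hpos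
  exact hpos.false

theorem add_sub_mem (T : ExtremalTriple G p φ c H) (hcov : ∀ m, m = i ∨ m = j ∨ m = k)
    (hu : u ∈ G) (hw : w ∈ G) (huH : |φ u - c| = H) (huw : φ u + φ w = c + c) (hle : w k ≤ u k) :
    p i + p j - w ∈ G := by
  have hcoord (m : Fin 3) : w m ≤ p i m ∨ w m ≤ u m ∨ w m ≤ p j m := by
    rcases hcov m with rfl | rfl | rfl
    · exact .inl (T.apply_le _ w hw)
    · exact .inr (.inr (T.apply_le _ w hw))
    · exact .inr (.inl hle)
  have hφw : φ w = c + c - φ u := eq_sub_of_add_eq' huw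
  have excluded (n : ℤ) (hn : 1 < |n|) {x : Fin 3 → ℤ} (hx : φ x - c = n * (φ u - c)) (h : x ∈ G) :
      p i + p j - w ∈ G := (T.notMem huH n hn hx h).elim
  rcases T.closed.orthant_alternatives (T.mem i) hu (T.mem j) hw hcoord with
    h | h | h | h | h | h | h
  · exact excluded 2 (by norm_num) (by simp only [map_add, map_sub, T.level, hφw]; ring) h
  · exact h
  · exact excluded 2 (by norm_num) (by simp only [map_add, map_sub, T.level, hφw]; ring) h
  · exact excluded 3 (by norm_num) (by simp only [map_add, map_sub, T.level, hφw]; ring) h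
  · exact excluded (-2) (by norm_num) (by simp only [map_add, map_sub, T.level, hφw]; ring) h
  · exact excluded (-3) (by norm_num) (by simp only [map_add, map_sub, hφw]; ring) h
  · exact excluded (-2) (by norm_num) (by simp only [map_add, map_sub, T.level, hφw]; ring) h

theorem apply_le_of_add_sub_mem (T : ExtremalTriple G p φ c H)
    (hcov : ∀ m, m = i ∨ m = j ∨ m = k) (hd : d ∈ G) (he : e ∈ G) (hdH : |φ d - c| = H)
    (hde : d + e = p i + p j) (hf : p k + d - p j ∈ G) :
    e i ≤ (p k + d - p j) i ∧ e k ≤ (p k + d - p j) k := by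
  have hφde : φ d + φ e = c + c := by rw [← map_add, hde, map_add, T.level, T.level]
  have hφe : φ e = c + c - φ d := eq_sub_of_add_eq' hφde
  have hd_eq : d = p i + p j - e := eq_sub_of_add_eq hde
  have hcov' (m : Fin 3) : m = j ∨ m = k ∨ m = i := or_assoc.1 (or_comm.1 (hcov m))
  generalize hf_eq : p k + d - p j = f at hf ⊢
  have hφf : φ f = φ d := by simp only [← hf_eq, map_add, map_sub, T.level]; ring
  have heH : |φ e - c| = H := by rw [hφe, ← hdH, abs_sub_comm]; congr 1; ring
  have hi : e i ≤ f i := by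
    by_contra! hlt
    have hmem : p j + p k - f ∈ G :=
      T.add_sub_mem hcov' he hf heH (by rw [hφf, hφe]; ring) hlt.le
    exact T.false_of_add_eq (i := j) hd hdH hmem (by rw [← hf_eq]; abel)
  refine ⟨hi, ?_⟩
  by_contra! hlt
  have hmem₁ : p i + p j - f ∈ G :=
    T.add_sub_mem hcov he hf heH (by rw [hφf, hφe]; ring) hlt.le
  have hmem₂ : p j + p k - e ∈ G :=
    T.add_sub_mem hcov' hf he (hφf ▸ hdH) (by rw [hφf, hφe]; ring) hi
  refine T.false_of_add_eq (i := j) hmem₂ ?_ hmem₁ (by rw [← hf_eq, hd_eq]; abel)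
  rw [← hdH, map_sub, map_add, T.level, T.level, hφe]
  congr 1; ring

theorem not_add_sub_mem_and_add_sub_mem (T : ExtremalTriple G p φ c H)
    (hcov : ∀ m, m = i ∨ m = j ∨ m = k) (hd : d ∈ G) (he : e ∈ G) (hdH : |φ d - c| = H)
    (hde : d + e = p i + p j) : ¬(p k + d - p j ∈ G ∧ p k + d - p i ∈ G) := by
  rintro ⟨hf, hg⟩
  obtain ⟨hfi, hfk⟩ := T.apply_le_of_add_sub_mem hcov hd he hdH hde hf
  obtain ⟨hgj, -⟩ := T.apply_le_of_add_sub_mem (fun m ↦ or_left_comm.1 (hcov m)) hd he hdH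
    (hde.trans (add_comm _ _)) hg
  have hφe : φ e = c + c - φ d := by
    rw [eq_sub_of_add_eq' hde, map_sub, map_add, T.level, T.level]
  have hcoord (m : Fin 3) :
      e m ≤ (p k + d - p j) m ∨ e m ≤ (p k + d - p i) m ∨ e m ≤ d m := by
    rcases hcov m with rfl | rfl | rfl
    exacts [.inl hfi, .inr (.inl hgj), .inl hfk]
  rcases T.closed.orthant_alternatives hf hg hd he hcoord with h | h | h | h | h | h | h
  iterate 3
    exact T.notMem hdH 3 (by norm_num) (by simp only [map_add, map_sub, T.level, hφe]; ring) h
  · exact T.notMem hdH 5 (by norm_num) (by simp only [map_add, map_sub, T.level, hφe]; ring) h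
  iterate 3
    exact T.notMem hdH (-3) (by norm_num)
      (by simp only [map_add, map_sub, T.level, hφe]; ring) h

theorem ne_of_add_eq (T : ExtremalTriple G p φ c H) (hcov : ∀ m, m = i ∨ m = j ∨ m = k)
    (hd : d ∈ G) (he : e ∈ G) (hdH : |φ d - c| = H) : d + e ≠ p i + p j := by
  intro hde
  have hφde : φ d + φ e = c + c := by rw [← map_add, hde, map_add, T.level, T.level]
  have heH : |φ e - c| = H := by
    rw [eq_sub_of_add_eq' hφde, ← hdH, abs_sub_comm]; congr 1; ring
  have hcov' (m : Fin 3) : m = j ∨ m = i ∨ m = k := or_left_comm.1 (hcov m)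
  have mem_of_le {i j : Fin 3} (hcov : ∀ m, m = i ∨ m = j ∨ m = k) (hde : d + e = p i + p j) :
      (e j ≤ d j → p k + d - p j ∈ G) ∧ (d j ≤ e j → p k + e - p j ∈ G) := by
    have hcov' (m : Fin 3) : m = i ∨ m = k ∨ m = j := (hcov m).imp_right Or.symm
    have hd_eq : p k + d - p j = p i + p k - e := by rw [eq_sub_of_add_eq hde]; abel
    have he_eq : p k + e - p j = p i + p k - d := by rw [eq_sub_of_add_eq' hde]; abel
    rw [hd_eq, he_eq]
    exact ⟨T.add_sub_mem hcov' hd he hdH hφde,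
      T.add_sub_mem hcov' he hd heH ((add_comm _ _).trans hφde)⟩
  obtain ⟨hdj, hej⟩ := mem_of_le hcov hde
  obtain ⟨hdi, hei⟩ := mem_of_le hcov' (hde.trans (add_comm _ _))
  have not_mixed {j : Fin 3} (hj : p k + d - p j ∈ G) (hi : p j + p k - d ∈ G) : False := by
    refine T.false_of_add_eq (i := k) hj ?_ hi (by abel)
    rw [← hdH, map_sub, map_add, T.level, T.level]; congr 1; ring
  have he_eq₁ : p k + e - p j = p i + p k - d := by rw [eq_sub_of_add_eq' hde]; abel
  have he_eq₂ : p k + e - p i = p j + p k - d := by rw [eq_sub_of_add_eq' hde]; abel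
  rcases le_total (e j) (d j) with hj | hj <;> rcases le_total (e i) (d i) with hi | hi
  · exact T.not_add_sub_mem_and_add_sub_mem hcov hd he hdH hde ⟨hdj hj, hdi hi⟩
  · exact not_mixed (hdj hj) (he_eq₂ ▸ hei hi)
  · exact not_mixed (hdi hi) (he_eq₁ ▸ hej hj)
  · exact T.not_add_sub_mem_and_add_sub_mem hcov he hd heH ((add_comm _ _).trans hde)
      ⟨hej hj, hei hi⟩

theorem abs_ne (T : ExtremalTriple G p φ c H) (hd : d ∈ G) : |φ d - c| ≠ H := by
  intro hdH
  have hcoord (m : Fin 3) : d m ≤ p 0 m ∨ d m ≤ p 1 m ∨ d m ≤ p 2 m := by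
    fin_cases m
    exacts [.inl (T.apply_le 0 d hd), .inr (.inl (T.apply_le 1 d hd)),
      .inr (.inr (T.apply_le 2 d hd))]
  rcases T.closed.orthant_alternatives (T.mem 0) (T.mem 1) (T.mem 2) hd hcoord with
    h | h | h | h | h | h | h
  · exact T.ne_of_add_eq (k := 2) (by decide) hd h hdH (add_sub_cancel _ _)
  · exact T.ne_of_add_eq (k := 1) (by decide) hd h hdH (add_sub_cancel _ _)
  · exact T.ne_of_add_eq (k := 0) (by decide) hd h hdH (add_sub_cancel _ _)
  · exact T.notMem hdH (-2) (by norm_num) (by simp only [map_add, map_sub, T.level]; ring) h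
  iterate 3
    exact T.notMem hdH 2 (by norm_num) (by simp only [map_add, map_sub, T.level]; ring) h

end ExtremalTriple

theorem TwoClosed.exists_dotProduct_eq_of_finite {G : Set (Fin 3 → ℤ)} (hG : TwoClosed (NN 3) G)
    (hne : G.Nonempty) (hfin : G.Finite) {I : Set (Fin 3)} (hI : I.Nonempty)
    (hGI : ∀ x ∈ G, ∀ i ∉ I, x i = 0) :
    ∃ l : Fin 3 → ℤ, l ≠ 0 ∧ (∀ i ∉ I, l i = 0) ∧ ∃ c, ∀ x ∈ G, l ⬝ᵥ x = c := by
  obtain ⟨i₀, hi₀⟩ := hI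
  choose q hqG hqmax hqext using exists_isExtreme_forall_apply_le hfin hne
  obtain ⟨l, hl, hlI, hlq⟩ := exists_ne_zero_dotProduct_eq hi₀ q
  refine ⟨l, hl, hlI, l ⬝ᵥ q i₀, ?_⟩
  by_contra! hex
  obtain ⟨x, hx, hxne⟩ := hex
  obtain ⟨d, hd, hdmax⟩ := G.exists_max_image (fun x ↦ |l ⬝ᵥ x - l ⬝ᵥ q i₀|) hfin hne
  let p : Fin 3 → Fin 3 → ℤ := fun i ↦ if i ∈ I then q i else q i₀
  have hp : ∀ i, (i ∈ I ∧ p i = q i) ∨ (i ∉ I ∧ p i = q i₀) := fun i ↦ by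
    by_cases hi : i ∈ I
    exacts [.inl ⟨hi, if_pos hi⟩, .inr ⟨hi, if_neg hi⟩]
  have T : ExtremalTriple G p (dotProductEquiv ℤ (Fin 3) l) (l ⬝ᵥ q i₀)
      |l ⬝ᵥ d - l ⬝ᵥ q i₀| := by
    refine ⟨hG, fun i ↦ ?_, fun i x hx ↦ ?_, fun i ↦ ?_, fun i ↦ ?_, hdmax,
      (abs_pos.2 (sub_ne_zero.2 hxne)).trans_le (hdmax x hx)⟩ <;>
    rcases hp i with ⟨hi, hpi⟩ | ⟨hi, hpi⟩ <;> rw [hpi]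
    · exact hqG i
    · exact hqG i₀
    · exact hqmax i x hx
    · rw [hGI x hx i hi, hGI _ (hqG i₀) i hi]
    · exact hqext i
    · exact hqext i₀
    · exact hlq i hi
    · rfl
  exact T.abs_ne hd rfl

end ExtremalTriple

section FullDimension

variable {d : ℕ} {Γ : Set (Fin d → ℤ)}

theorem HasDim.eq_zero_of_dotProduct_eq (hdim : HasDim Γ d) (hne : Γ.Nonempty) {l : Fin d → ℤ}
    {c : ℤ} (hl : ∀ x ∈ Γ, l ⬝ᵥ x = c) : l = 0 := by
  obtain ⟨g, hg⟩ := hne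
  let φ : (Fin d → ℤ) →ₗ[ℤ] ℤ := dotProductEquiv ℤ (Fin d) l
  have hker : Submodule.span ℤ ((· - g) '' Γ) ≤ LinearMap.ker φ := by
    rw [Submodule.span_le]
    rintro _ ⟨x, hx, rfl⟩
    exact (dotProduct_sub l x g).trans (sub_eq_zero.2 ((hl x hx).trans (hl g hg).symm))
  have hrank : d ≤ Module.finrank ℤ (LinearMap.ker φ) :=
    (hdim g hg).ge.trans (Submodule.finrank_mono hker)
  have hsum := (LinearMap.ker φ).finrank_quotient_add_finrank
  rw [φ.quotKerEquivRange.finrank_eq, Module.finrank_fin_fun] at hsum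
  have hφ : φ = 0 := LinearMap.range_eq_bot.1 (Submodule.finrank_eq_zero.1 (by lia))
  exact (map_eq_zero_iff _ (dotProductEquiv ℤ (Fin d)).injective).1 hφ

theorem dotProduct_coordProj {I : Set (Fin d)} {l : Fin d → ℤ} (hl : ∀ i ∉ I, l i = 0)
    (x : Fin d → ℤ) : l ⬝ᵥ coordProj I x = l ⬝ᵥ x := by
  refine Finset.sum_congr rfl fun i _ ↦ ?_
  by_cases hi : i ∈ I
  · rw [coordProj_of_mem hi]
  · rw [hl i hi, zero_mul, zero_mul]

theorem TwoClosed.exists_isCoset_of_hasDim_three {Γ : Set (Fin 3 → ℤ)} (hΓ : TwoClosed (NN 3) Γ)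
    (hne : Γ.Nonempty) (hdim : HasDim Γ 3) : ∃ Λ, IsCoset Λ ∧ Γ = Λ ∩ NN 3 := by
  refine hΓ.exists_isCoset_or_finite_coordProj hne |>.resolve_right ?_
  rintro ⟨I, hI, hclosed, hfin⟩
  obtain ⟨l, hl, hlI, c, hlc⟩ := hclosed.exists_dotProduct_eq_of_finite (hne.image _) hfin hI <| by
    rintro _ ⟨x, -, rfl⟩ i hi
    exact coordProj_of_notMem hi x
  exact hl <| hdim.eq_zero_of_dotProduct_eq hne fun x hx ↦
    (dotProduct_coordProj hlI x).symm.trans (hlc _ ⟨x, hx, rfl⟩)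

end FullDimension

section TrigonometricPolynomials

variable {d : ℕ} (α β : Fin d → ℤ) (x : Torus d)

theorem torusChar_zero : torusChar 0 x = 1 := by
  simp [torusChar]

theorem torusChar_apply_zero : torusChar α 0 = 1 := by
  simp [torusChar]

theorem torusChar_add : torusChar (α + β) x = torusChar α x * torusChar β x := by
  simp only [torusChar, Pi.add_apply, fourier_add, Finset.prod_mul_distrib]

theorem torusChar_neg : torusChar (-α) x = star (torusChar α x) := by
  simp only [torusChar, Pi.neg_apply, star_prod, fourier_neg, RCLike.star_def]

theorem torusChar_sub : torusChar (α - β) x = torusChar α x * star (torusChar β x) := by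
  rw [sub_eq_add_neg, torusChar_add, torusChar_neg]

theorem torusChar_sum {ι : Type*} (s : Finset ι) (e : ι → Fin d → ℤ) :
    torusChar (∑ i ∈ s, e i) x = ∏ i ∈ s, torusChar (e i) x := by
  induction s using Finset.induction_on with
  | empty => exact torusChar_zero x
  | insert i s hi ih => rw [Finset.sum_insert hi, Finset.prod_insert hi, torusChar_add, ih]

@[simp]
theorem norm_torusChar : ‖torusChar α x‖ = 1 := by
  simp only [torusChar, norm_prod, fourier_apply, Circle.norm_coe, Finset.prod_const_one]

@[fun_prop]
theorem continuous_torusChar : Continuous (torusChar α) := by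
  unfold torusChar
  fun_prop

theorem integral_fourier (n : ℤ) :
    ∫ x : AddCircle (1 : ℝ), fourier n x = if n = 0 then 1 else 0 := by
  have h := congrFun (fourierCoeff_fourier (T := 1) n) 0
  simp only [fourierCoeff, neg_zero, fourier_zero, one_smul, AddCircle.integral_haarAddCircle,
    inv_one, Pi.single_apply, eq_comm (a := (0 : ℤ))] at h
  exact h

theorem integral_torusChar : ∫ x, torusChar α x = if α = 0 then 1 else 0 := by
  unfold torusChar
  rw [volume_pi, integral_fintype_prod_eq_prod (𝕜 := ℂ)
    (fun j (x : AddCircle (1 : ℝ)) ↦ (fourier (α j) x : ℂ))]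
  simp only [integral_fourier, Finset.prod_ite_zero, Finset.prod_const_one, Finset.mem_univ,
    true_implies, funext_iff, Pi.zero_apply]

theorem integrable_of_continuous {X E : Type*} [TopologicalSpace X] [CompactSpace X]
    [MeasurableSpace X] [OpensMeasurableSpace X] {μ : Measure X} [IsFiniteMeasureOnCompacts μ]
    [NormedAddCommGroup E] {f : X → E} (hf : Continuous f) : Integrable f μ :=
  hf.integrable_of_hasCompactSupport (.of_compactSpace f)

/-- The space of trigonometric polynomials with frequencies in `A`. -/
def trigPolySpace (A : Set (Fin d → ℤ)) : Submodule ℂ (Torus d → ℂ) :=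
  Submodule.span ℂ (torusChar '' A)

variable {A B : Set (Fin d → ℤ)} {f g : Torus d → ℂ} {α}

theorem torusChar_mem_trigPolySpace (hα : α ∈ A) : torusChar α ∈ trigPolySpace A :=
  Submodule.subset_span ⟨α, hα, rfl⟩

theorem continuous_of_mem_trigPolySpace (hf : f ∈ trigPolySpace A) : Continuous f := by
  induction hf using Submodule.span_induction with
  | mem f hf => obtain ⟨α, -, rfl⟩ := hf; exact continuous_torusChar α
  | zero => exact continuous_zero
  | add f g _ _ hf hg => exact hf.add hg
  | smul c f _ hf => exact hf.const_smul c

theorem mem_trigPolySpace_iff :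
    f ∈ trigPolySpace A ↔ ∃ l : (Fin d → ℤ) →₀ ℂ, ↑l.support ⊆ A ∧ trigPoly l.support l = f := by
  rw [trigPolySpace, Finsupp.mem_span_image_iff_linearCombination]
  refine exists_congr fun l ↦ and_congr Iff.rfl ?_
  rw [Finsupp.linearCombination_apply, Finsupp.sum]
  refine Eq.congr_left (funext fun x ↦ ?_)
  simp [trigPoly]

theorem trigPoly_mem_trigPolySpace {F : Finset (Fin d → ℤ)} (hF : ↑F ⊆ A) (a : (Fin d → ℤ) → ℂ) :
    trigPoly F a ∈ trigPolySpace A := by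
  have heq : trigPoly F a = ∑ α ∈ F, a α • torusChar α := by
    ext x; simp [trigPoly]
  exact heq ▸ Submodule.sum_mem _ fun α hα ↦
    Submodule.smul_mem _ _ (torusChar_mem_trigPolySpace (hF hα))

open scoped Pointwise in
theorem mul_mem_trigPolySpace (hf : f ∈ trigPolySpace A) (hg : g ∈ trigPolySpace B) :
    f * g ∈ trigPolySpace (A + B) := by
  have hfg := Submodule.mul_mem_mul hf hg
  rw [trigPolySpace, trigPolySpace, Submodule.span_mul_span] at hfg
  refine Submodule.span_mono ?_ hfg
  rintro _ ⟨_, ⟨α, hα, rfl⟩, _, ⟨β, hβ, rfl⟩, rfl⟩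
  exact ⟨α + β, Set.add_mem_add hα hβ, funext fun x ↦ torusChar_add α β x⟩

open scoped Pointwise in
theorem star_mem_trigPolySpace (hf : f ∈ trigPolySpace A) : star f ∈ trigPolySpace (-A) := by
  induction hf using Submodule.span_induction with
  | mem f hf =>
    obtain ⟨α, hα, rfl⟩ := hf
    exact Submodule.subset_span ⟨-α, Set.neg_mem_neg.2 hα, funext fun x ↦ torusChar_neg α x⟩
  | zero => simp
  | add f g _ _ hf hg => simpa using add_mem hf hg
  | smul c f _ hf => simpa using Submodule.smul_mem _ (star c) hf

theorem integral_eq_zero_of_mem_trigPolySpace (hf : f ∈ trigPolySpace A) (hA : 0 ∉ A) :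
    ∫ x, f x = 0 := by
  induction hf using Submodule.span_induction with
  | mem f hf =>
    obtain ⟨α, hα, rfl⟩ := hf
    rw [integral_torusChar, if_neg (ne_of_mem_of_not_mem hα hA)]
  | zero => exact integral_zero _ _
  | add f g hf hg ihf ihg =>
    rw [integral_add' (integrable_of_continuous (continuous_of_mem_trigPolySpace hf))
      (integrable_of_continuous (continuous_of_mem_trigPolySpace hg)), ihf, ihg, add_zero]
  | smul c f _ ihf =>
    simp only [Pi.smul_apply, integral_smul, ihf, smul_zero]

end TrigonometricPolynomials

section ContractiveProjections

theorem eLpNorm_le_eLpNorm_iff_integral {X : Type*} [TopologicalSpace X] [CompactSpace X]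
    [MeasurableSpace X] [OpensMeasurableSpace X] {μ : Measure X} [IsFiniteMeasure μ]
    {p : ℝ≥0∞} (hp : p ≠ 0) (hp_top : p ≠ ⊤) {f g : X → ℂ} (hf : Continuous f)
    (hg : Continuous g) :
    eLpNorm f p μ ≤ eLpNorm g p μ ↔ ∫ x, ‖f x‖ ^ p.toReal ∂μ ≤ ∫ x, ‖g x‖ ^ p.toReal ∂μ := by
  have memLp {f : X → ℂ} (hf : Continuous f) : MemLp f p μ :=
    hf.memLp_of_hasCompactSupport (.of_compactSpace f)
  have nonneg (f : X → ℂ) : 0 ≤ ∫ x, ‖f x‖ ^ p.toReal ∂μ :=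
    integral_nonneg fun x ↦ Real.rpow_nonneg (norm_nonneg _) _
  rw [(memLp hf).eLpNorm_eq_integral_rpow_norm hp hp_top,
    (memLp hg).eLpNorm_eq_integral_rpow_norm hp hp_top,
    ENNReal.ofReal_le_ofReal_iff (Real.rpow_nonneg (nonneg g) _),
    Real.rpow_le_rpow_iff (nonneg f) (nonneg g) (inv_pos.2 (ENNReal.toReal_pos hp hp_top))]

variable {d : ℕ} {p : ℝ≥0∞} {Γ : Set (Fin d → ℤ)} {f g : Torus d → ℂ}

theorem isContractiveHp_iff (hΓ : Γ ⊆ NN d) :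
    IsContractiveHp d p Γ ↔ ∀ f ∈ trigPolySpace Γ, ∀ g ∈ trigPolySpace (NN d \ Γ),
      eLpNorm f p volume ≤ eLpNorm (f + g) p volume := by
  refine ⟨fun h f hf g hg ↦ ?_, fun h F hF a ↦ ?_⟩
  · obtain ⟨l, hl, rfl⟩ := mem_trigPolySpace_iff.1 hf
    obtain ⟨m, hm, rfl⟩ := mem_trigPolySpace_iff.1 hg
    have hdisj : Disjoint l.support m.support :=
      Finset.disjoint_left.2 fun α hα hα' ↦ (hm hα').2 (hl hα)
    have hsupp : ↑(l + m).support ⊆ NN d := by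
      rw [Finsupp.support_add_eq hdisj, Finset.coe_union]
      exact Set.union_subset (hl.trans hΓ) (hm.trans Set.sdiff_subset)
    have hfilter : (l + m).support.filter (· ∈ Γ) = l.support := by
      rw [Finsupp.support_add_eq hdisj, Finset.filter_union, Finset.filter_true_of_mem @hl,
        Finset.filter_false_of_mem fun α hα ↦ (hm hα).2, Finset.union_empty]
    have hleft : trigPoly l.support ⇑(l + m) = trigPoly l.support l :=
      funext fun x ↦ Finset.sum_congr rfl fun α hα ↦ by
        rw [Finsupp.add_apply, Finsupp.notMem_support_iff.1 (Finset.disjoint_left.1 hdisj hα),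
          add_zero]
    have hright : trigPoly (l + m).support ⇑(l + m)
        = trigPoly l.support l + trigPoly m.support m :=
      funext fun x ↦ Finsupp.sum_add_index' (h := fun α c ↦ c * torusChar α x)
        (fun α ↦ zero_mul _) fun α b c ↦ add_mul b c _
    simpa only [hfilter, hleft, hright] using h _ hsupp ⇑(l + m)
  · have hsplit : trigPoly F a = trigPoly (F.filter (· ∈ Γ)) a + trigPoly (F.filter (· ∉ Γ)) a :=
      funext fun x ↦ (Finset.sum_filter_add_sum_filter_not F (· ∈ Γ) _).symm
    rw [hsplit]
    refine h _ (trigPoly_mem_trigPolySpace (fun α hα ↦ ?_) a) _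
      (trigPoly_mem_trigPolySpace (fun α hα ↦ ?_) a)
    · exact (Finset.mem_filter.1 hα).2
    · exact ⟨hF (Finset.mem_filter.1 hα).1, (Finset.mem_filter.1 hα).2⟩

theorem eLpNorm_le_of_forall_add_re_le {n : ℕ} (hn : n ≠ 0) {w : Torus d → ℂ}
    (hf : Continuous f) (hg : Continuous g) (hw : Continuous w) (horth : ∫ x, (w * g) x = 0)
    (hle : ∀ x, ‖f x‖ ^ n + n * (w x * g x).re ≤ ‖f x + g x‖ ^ n) :
    eLpNorm f n volume ≤ eLpNorm (f + g) n volume := by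
  rw [eLpNorm_le_eLpNorm_iff_integral (Nat.cast_ne_zero.2 hn) (ENNReal.natCast_ne_top n) hf
    (hf.add hg)]
  simp only [ENNReal.toReal_natCast, Real.rpow_natCast]
  have hwg : Integrable (w * g) := integrable_of_continuous (hw.mul hg)
  have hwg_re : Integrable fun x ↦ n * (w x * g x).re := hwg.re.const_mul _
  have hre : ∫ x, (w x * g x).re = 0 := (integral_re hwg).trans (congrArg Complex.re horth)
  have hfn : Integrable fun x ↦ ‖f x‖ ^ n := integrable_of_continuous (hf.norm.pow n)
  calc ∫ x, ‖f x‖ ^ n = ∫ x, (‖f x‖ ^ n + n * (w x * g x).re) := by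
        rw [integral_add hfn hwg_re, integral_const_mul, hre, mul_zero, add_zero]
    _ ≤ ∫ x, ‖(f + g) x‖ ^ n :=
        integral_mono (hfn.add hwg_re)
          (integrable_of_continuous ((hf.add hg).norm.pow n)) hle

theorem norm_sq_add_re_le (z w : ℂ) :
    ‖z‖ ^ 2 + (2 : ℕ) * (star z * w).re ≤ ‖z + w‖ ^ 2 := by
  have hw : 0 ≤ Complex.normSq w := Complex.normSq_nonneg w
  have hre : (z * star w).re = (star z * w).re := by simp
  rw [Complex.sq_norm, Complex.sq_norm, Complex.normSq_add, ← RCLike.star_def, hre]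
  push_cast
  linarith

theorem norm_pow_four_add_re_le (z w : ℂ) :
    ‖z‖ ^ 4 + (4 : ℕ) * (z * star z * star z * w).re ≤ ‖z + w‖ ^ 4 := by
  have hmul := mul_le_mul_of_nonneg_left (norm_sq_add_re_le z w) (sq_nonneg ‖z‖)
  have hre : (z * star z * star z * w).re = ‖z‖ ^ 2 * (star z * w).re := by
    rw [← Complex.re_ofReal_mul, mul_assoc, RCLike.star_def, Complex.mul_conj,
      Complex.normSq_eq_norm_sq]
  push_cast at hmul ⊢
  rw [hre]
  nlinarith [sq_nonneg (‖z + w‖ ^ 2 - ‖z‖ ^ 2)]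

theorem isContractiveHp_two (hΓ : Γ ⊆ NN d) : IsContractiveHp d 2 Γ := by
  refine (isContractiveHp_iff hΓ).2 fun f hf g hg ↦ ?_
  have hcf := continuous_of_mem_trigPolySpace hf
  refine mod_cast eLpNorm_le_of_forall_add_re_le two_ne_zero hcf
    (continuous_of_mem_trigPolySpace hg) hcf.star ?_ fun x ↦ norm_sq_add_re_le (f x) (g x)
  refine integral_eq_zero_of_mem_trigPolySpace
    (mul_mem_trigPolySpace (star_mem_trigPolySpace hf) hg) ?_
  rintro ⟨α, hα, β, hβ, h⟩
  exact hβ.2 (neg_eq_of_add_eq_zero_right h ▸ hα)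

/-- `G ⊆ P` contains every point of `P` of the form `a + b - c` with `a, b, c ∈ G`. For `P = ℕ₀^d`
this is the paper's condition that `G` equals its `1`-extension. -/
structure OneClosed {M : Type*} [AddCommGroup M] (P G : Set M) : Prop where
  subset : G ⊆ P
  mem : ∀ ⦃a b c : M⦄, a ∈ G → b ∈ G → c ∈ G → a + b - c ∈ P → a + b - c ∈ G

theorem OneClosed.isContractiveHp_four (hΓ : OneClosed (NN d) Γ) : IsContractiveHp d 4 Γ := by
  refine (isContractiveHp_iff hΓ.subset).2 fun f hf g hg ↦ ?_
  have hcf := continuous_of_mem_trigPolySpace hf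
  refine mod_cast eLpNorm_le_of_forall_add_re_le four_ne_zero hcf
    (continuous_of_mem_trigPolySpace hg) ((hcf.mul hcf.star).mul hcf.star) ?_
    fun x ↦ norm_pow_four_add_re_le (f x) (g x)
  have hf' := star_mem_trigPolySpace hf
  refine integral_eq_zero_of_mem_trigPolySpace (mul_mem_trigPolySpace
    (mul_mem_trigPolySpace (mul_mem_trigPolySpace hf hf') hf') hg) ?_
  rintro ⟨_, ⟨_, ⟨c, hc, a, ha, rfl⟩, b, hb, rfl⟩, β, hβ, h⟩
  have hβ_eq : β = -a + -b - c := by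
    rw [eq_neg_of_add_eq_zero_right h]; beta_reduce; abel
  exact hβ.2 (hβ_eq ▸ hΓ.mem ha hb hc (hβ_eq ▸ hβ.1))

end ContractiveProjections

section Counterexamples

variable {d k : ℕ} {p : ℝ≥0∞} {Γ : Set (Fin d → ℤ)}

theorem IsCoset.twoClosed {Λ : Set (Fin d → ℤ)} (hΛ : IsCoset Λ) :
    TwoClosed (NN d) (Λ ∩ NN d) where
  subset := Set.inter_subset_right
  mem := by
    obtain ⟨x, H, rfl⟩ := hΛ
    rintro _ _ _ _ _ ⟨⟨a, ha, rfl⟩, -⟩ ⟨⟨b, hb, rfl⟩, -⟩ ⟨⟨c, hc, rfl⟩, -⟩ ⟨⟨u, hu, rfl⟩, -⟩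
      ⟨⟨v, hv, rfl⟩, -⟩ h
    refine ⟨⟨a + b + c - u - v, ?_, by beta_reduce; abel⟩, h⟩
    exact H.sub_mem (H.sub_mem (H.add_mem (H.add_mem ha hb) hc) hu) hv

theorem OneClosed.twoClosed_of_contractiveRestrictionProperty (hp : p = 2 ∨ p = 4)
    (h : ContractiveRestrictionProperty d p k) (hΓ : OneClosed (NN d) Γ) (hne : Γ.Nonempty)
    (hdim : HasDim Γ k) : TwoClosed (NN d) Γ := by
  have hcontr : IsContractiveHp d p Γ := by
    rcases hp with rfl | rfl
    exacts [isContractiveHp_two hΓ.subset, hΓ.isContractiveHp_four]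
  obtain ⟨Λ, hΛ, rfl⟩ := h Γ hne hΓ.subset hdim hcontr
  exact hΛ.twoClosed

theorem hasDim_range_of_affineIndependent {q : Fin (k + 1) → Fin d → ℤ}
    (hq : AffineIndependent ℤ q) : HasDim (Set.range q) k := by
  intro γ₀ hγ₀
  have hli := (affineIndependent_iff_linearIndependent_vsub ℤ q 0).1 hq
  have hspan : Submodule.span ℤ ((· - γ₀) '' Set.range q) = vectorSpan ℤ (Set.range q) :=
    (vectorSpan_eq_span_vsub_set_right ℤ hγ₀).symm
  rw [hspan, vectorSpan_range_eq_span_range_vsub_right_ne ℤ q 0, finrank_span_eq_card hli]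
  simp

theorem OneClosed.image {M M' : Type*} [AddCommGroup M] [AddCommGroup M'] {P : Set M} {G : Set M'}
    (f : M' →ₗ[ℤ] M) (hG : OneClosed (f ⁻¹' P) G) : OneClosed P (f '' G) where
  subset := Set.image_subset_iff.2 hG.subset
  mem := by
    rintro _ _ _ ⟨a, ha, rfl⟩ ⟨b, hb, rfl⟩ ⟨c, hc, rfl⟩ h
    rw [← map_add, ← map_sub] at h ⊢
    exact ⟨_, hG.mem ha hb hc h, rfl⟩

theorem extendByZero_mem_NN_iff {m : ℕ} {s : Fin m → Fin d} (hs : s.Injective) {x : Fin m → ℤ} :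
    Function.ExtendByZero.linearMap ℤ s x ∈ NN d ↔ x ∈ NN m := by
  refine ⟨fun h i ↦ (h (s i)).trans_eq (hs.extend_apply x 0 i), fun h j ↦ ?_⟩
  by_cases hj : ∃ i, s i = j
  · obtain ⟨i, rfl⟩ := hj
    exact (h i).trans_eq (hs.extend_apply x 0 i).symm
  · exact (Function.extend_apply' x (0 : Fin d → ℤ) j hj).ge

theorem not_contractiveRestrictionProperty_of_oneClosed {m : ℕ} (hp : p = 2 ∨ p = 4) (hm : m ≤ d)
    {q : Fin (k + 1) → Fin m → ℤ} (hq : AffineIndependent ℤ q)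
    (h_one : OneClosed (NN m) (Set.range q)) (h_two : ¬TwoClosed (NN m) (Set.range q)) :
    ¬ContractiveRestrictionProperty d p k := by
  have hs : (Fin.castLE hm).Injective := Fin.castLE_injective hm
  let f := Function.ExtendByZero.linearMap ℤ (Fin.castLE hm)
  have hf : Function.Injective f := Function.extend_injective hs 0
  have hpre : f ⁻¹' NN d = NN m := Set.ext fun x ↦ extendByZero_mem_NN_iff hs
  rw [← hpre] at h_one h_two
  intro h
  have hdim : HasDim (f '' Set.range q) k := by
    rw [← Set.range_comp]
    exact hasDim_range_of_affineIndependent (hq.map' f.toAffineMap hf)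
  have hclosed := ((h_one.image f).twoClosed_of_contractiveRestrictionProperty hp h
    ((Set.range_nonempty q).image f) hdim).preimage 0 f
  simp only [zero_add] at hclosed
  exact h_two (Set.preimage_image_eq (Set.range q) hf ▸ hclosed)

theorem oneClosed_range {ι : Type*} {q : ι → Fin d → ℤ} (hnonneg : ∀ i n, 0 ≤ q i n)
    (hmem : ∀ i j l, (∀ n, 0 ≤ (q i + q j - q l) n) → ∃ m, q m = q i + q j - q l) :
    OneClosed (NN d) (Set.range q) where
  subset := Set.range_subset_iff.2 hnonneg
  mem := by
    rintro _ _ _ ⟨i, rfl⟩ ⟨j, rfl⟩ ⟨l, rfl⟩ hn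
    exact hmem i j l hn

theorem not_contractiveRestrictionProperty_dim_two (hp : p = 2 ∨ p = 4) (hd : 3 ≤ d) :
    ¬ContractiveRestrictionProperty d p 2 := by
  let q : Fin 3 → Fin 3 → ℤ := ![![1, 1, 1], ![3, 0, 0], ![0, 3, 0]]
  refine not_contractiveRestrictionProperty_of_oneClosed hp hd (q := q) ?_
    (oneClosed_range (by decide) (by decide)) fun h ↦ ?_
  · refine (affineIndependent_iff_of_fintype ℤ q).2 fun w hw hwq ↦ ?_
    rw [Finset.weightedVSub_eq_linear_combination Finset.univ hw] at hwq
    simp only [q, Fin.sum_univ_succ, funext_iff, Fin.forall_fin_succ] at hw hwq ⊢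
    simp at hw hwq ⊢
    lia
  · have hnotMem : ∀ m, q m ≠ q 0 + q 0 + q 0 - q 1 - q 2 := by decide
    obtain ⟨m, hm⟩ := h.mem ⟨0, rfl⟩ ⟨0, rfl⟩ ⟨0, rfl⟩ ⟨1, rfl⟩ ⟨2, rfl⟩
      (show ∀ n, 0 ≤ (q 0 + q 0 + q 0 - q 1 - q 2) n by decide)
    exact hnotMem m hm

theorem not_contractiveRestrictionProperty_dim_three (hp : p = 2 ∨ p = 4) :
    ¬ContractiveRestrictionProperty 3 p 3 := by
  let q : Fin 4 → Fin 3 → ℤ := ![![1, 1, 1], ![4, 0, 0], ![0, 4, 0], ![0, 0, 4]]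
  refine not_contractiveRestrictionProperty_of_oneClosed hp le_rfl (q := q) ?_
    (oneClosed_range (by decide) (by decide)) fun h ↦ ?_
  · refine (affineIndependent_iff_of_fintype ℤ q).2 fun w hw hwq ↦ ?_
    rw [Finset.weightedVSub_eq_linear_combination Finset.univ hw] at hwq
    simp only [q, Fin.sum_univ_succ, funext_iff, Fin.forall_fin_succ] at hw hwq ⊢
    simp at hw hwq ⊢
    lia
  · have hnotMem : ∀ m, q m ≠ q 1 + q 2 + q 3 - q 0 - q 0 := by decide
    obtain ⟨m, hm⟩ := h.mem ⟨1, rfl⟩ ⟨2, rfl⟩ ⟨3, rfl⟩ ⟨0, rfl⟩ ⟨0, rfl⟩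
      (show ∀ n, 0 ≤ (q 1 + q 2 + q 3 - q 0 - q 0) n by decide)
    exact hnotMem m hm

end Counterexamples

section Supremum

theorem norm_sub_mul_star_mul_star_le {a b c u v : ℂ} (ha : ‖a‖ = 1) (hb : ‖b‖ = 1)
    (hu : ‖u‖ = 1) (hv : ‖v‖ = 1) :
    ‖a - a * b * c * star u * star v‖ ≤ ‖b - u‖ + ‖c - v‖ := by
  have mul_star {z : ℂ} (hz : ‖z‖ = 1) : z * star z = 1 := by
    rw [RCLike.star_def, Complex.mul_conj, Complex.normSq_eq_norm_sq, hz]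
    norm_num
  have heq : a - a * b * c * star u * star v
      = -(a * star u * star v * ((b - u) * v + b * (c - v))) := by
    linear_combination (-a * v * star v) * mul_star hu - a * mul_star hv
  rw [heq, norm_neg, norm_mul, norm_mul, norm_mul, norm_star, norm_star, ha, hu, hv]
  simpa [hb, hv] using norm_add_le ((b - u) * v) (b * (c - v))

theorem norm_sum_sub_sq_of_norm_eq_one {a b c u v χ : ℂ} (ha : ‖a‖ = 1) (hb : ‖b‖ = 1)
    (hc : ‖c‖ = 1) (hu : ‖u‖ = 1) (hv : ‖v‖ = 1) (hχ : ‖χ‖ = 1) (t : ℝ) :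
    ‖a + b + c + u + v - t * χ‖ ^ 2 = (5 - t) ^ 2
      - (‖b - a‖ ^ 2 + ‖c - a‖ ^ 2 + ‖u - a‖ ^ 2 + ‖v - a‖ ^ 2 + ‖b - c‖ ^ 2 + ‖b - u‖ ^ 2
        + ‖b - v‖ ^ 2 + ‖c - u‖ ^ 2 + ‖c - v‖ ^ 2 + ‖u - v‖ ^ 2)
      + t * (‖a - χ‖ ^ 2 + ‖b - χ‖ ^ 2 + ‖c - χ‖ ^ 2 + ‖u - χ‖ ^ 2 + ‖v - χ‖ ^ 2) := by
  have normSq_eq {z : ℂ} (hz : ‖z‖ = 1) : z.re * z.re + z.im * z.im = 1 := by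
    rw [← Complex.normSq_apply, Complex.normSq_eq_norm_sq, hz, one_pow]
  simp only [Complex.sq_norm, Complex.normSq_apply, Complex.add_re, Complex.sub_re,
    Complex.add_im, Complex.sub_im, Complex.re_ofReal_mul, Complex.im_ofReal_mul]
  linear_combination (5 - t) * (normSq_eq ha + normSq_eq hb + normSq_eq hc + normSq_eq hu
    + normSq_eq hv - t * normSq_eq hχ)

/-- If the points `a, b, c, u, v` of the unit circle nearly coincide, then so does
`a * b * c * star u * star v`, so that subtracting a small multiple of it shortens their sum. -/
theorem norm_sum_sub_mul_star_mul_star_le {a b c u v : ℂ} (ha : ‖a‖ = 1) (hb : ‖b‖ = 1)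
    (hc : ‖c‖ = 1) (hu : ‖u‖ = 1) (hv : ‖v‖ = 1) :
    ‖a + b + c + u + v - (1 / 15 : ℝ) * (a * b * c * star u * star v)‖ ≤ 5 - 1 / 15 := by
  have hχ : ‖a * b * c * star u * star v‖ = 1 := by simp [ha, hb, hc, hu, hv]
  have hdist := norm_sub_mul_star_mul_star_le (c := c) ha hb hu hv
  generalize a * b * c * star u * star v = χ at hχ hdist ⊢
  have dist_sq_le (z : ℂ) : ‖z - χ‖ ^ 2 ≤ 3 * (‖z - a‖ ^ 2 + ‖b - u‖ ^ 2 + ‖c - v‖ ^ 2) := by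
    calc ‖z - χ‖ ^ 2 ≤ (‖z - a‖ + (‖b - u‖ + ‖c - v‖)) ^ 2 := by
          gcongr
          exact (norm_sub_le_norm_sub_add_norm_sub z a χ).trans (by gcongr)
      _ ≤ 3 * (‖z - a‖ ^ 2 + ‖b - u‖ ^ 2 + ‖c - v‖ ^ 2) := by
          linarith [sq_nonneg (‖z - a‖ - ‖b - u‖), sq_nonneg (‖z - a‖ - ‖c - v‖),
            sq_nonneg (‖b - u‖ - ‖c - v‖)]
  have hdist_a : ‖a - χ‖ ^ 2 ≤ 3 * (‖b - u‖ ^ 2 + ‖c - v‖ ^ 2) := by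
    simpa using dist_sq_le a
  refine le_of_sq_le_sq ?_ (by norm_num)
  rw [norm_sum_sub_sq_of_norm_eq_one ha hb hc hu hv hχ]
  linarith [dist_sq_le b, dist_sq_le c, dist_sq_le u, dist_sq_le v, sq_nonneg ‖b - a‖,
    sq_nonneg ‖c - a‖, sq_nonneg ‖u - a‖, sq_nonneg ‖v - a‖, sq_nonneg ‖b - c‖, sq_nonneg ‖b - v‖,
    sq_nonneg ‖c - u‖, sq_nonneg ‖u - v‖]

theorem enorm_le_eLpNorm_top {X E : Type*} [TopologicalSpace X] [MeasurableSpace X]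
    {μ : Measure X} [μ.IsOpenPosMeasure] [NormedAddCommGroup E] {f : X → E} (hf : Continuous f)
    (x : X) : ‖f x‖ₑ ≤ eLpNorm f ⊤ μ := by
  rw [eLpNorm_exponent_top]
  have hdense := Measure.dense_of_ae (ae_le_eLpNormEssSup (f := f) (μ := μ))
  have hclosed : IsClosed {x | ‖f x‖ₑ ≤ eLpNormEssSup f μ} :=
    isClosed_le (by fun_prop) continuous_const
  exact hclosed.closure_subset (hdense x)

theorem IsContractiveHp.twoClosed_top {d : ℕ} {Γ : Set (Fin d → ℤ)} (hΓ : Γ ⊆ NN d)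
    (h : IsContractiveHp d ⊤ Γ) : TwoClosed (NN d) Γ where
  subset := hΓ
  mem a b c u v ha hb hc hu hv hmem := by
    by_contra hnotMem
    let f : Torus d → ℂ :=
      torusChar a + torusChar b + torusChar c + torusChar u + torusChar v
    let g : Torus d → ℂ := (-(1 / 15 : ℝ) : ℂ) • torusChar (a + b + c - u - v)
    have hf : f ∈ trigPolySpace Γ := by
      apply_rules [add_mem, torusChar_mem_trigPolySpace]
    have hg : g ∈ trigPolySpace (NN d \ Γ) :=
      Submodule.smul_mem _ _ (torusChar_mem_trigPolySpace ⟨hmem, hnotMem⟩)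
    have hbound (x : Torus d) : ‖(f + g) x‖ ≤ 5 - 1 / 15 := by
      have heq : (f + g) x = torusChar a x + torusChar b x + torusChar c x + torusChar u x
          + torusChar v x - (1 / 15 : ℝ) * (torusChar a x * torusChar b x * torusChar c x
            * star (torusChar u x) * star (torusChar v x)) := by
        simp only [f, g, Pi.add_apply, Pi.smul_apply, torusChar_sub, torusChar_add, smul_eq_mul]
        ring
      rw [heq]
      apply norm_sum_sub_mul_star_mul_star_le <;> exact norm_torusChar _ _
    have hf_zero : f 0 = 5 := by
      simp only [f, Pi.add_apply, torusChar_apply_zero]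
      norm_num
    have hle : ENNReal.ofReal 5 ≤ ENNReal.ofReal (5 - 1 / 15) := by
      calc ENNReal.ofReal 5 = ‖f 0‖ₑ := by rw [hf_zero, ← ofReal_norm]; norm_num
        _ ≤ eLpNorm f ⊤ volume := enorm_le_eLpNorm_top (continuous_of_mem_trigPolySpace hf) 0
        _ ≤ eLpNorm (f + g) ⊤ volume := (isContractiveHp_iff hΓ).1 h f hf g hg
        _ ≤ ENNReal.ofReal (5 - 1 / 15) := by
          rw [eLpNorm_exponent_top]
          exact eLpNormEssSup_le_of_ae_bound (.of_forall hbound)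
    rw [ENNReal.ofReal_le_ofReal_iff (by norm_num)] at hle
    norm_num at hle

end Supremum

section FirstVariation

open scoped Topology

theorem hasDerivAt_integral_of_continuousOn {𝕜 X E : Type*} [RCLike 𝕜] [TopologicalSpace X]
    [CompactSpace X] [MeasurableSpace X] [OpensMeasurableSpace X] {μ : Measure X}
    [IsFiniteMeasureOnCompacts μ] [NormedAddCommGroup E] [NormedSpace ℝ E] [NormedSpace 𝕜 E]
    {F F' : 𝕜 → X → E} {s : Set 𝕜} {t₀ : 𝕜} (hs : s ∈ 𝓝 t₀) (hF : ∀ t ∈ s, Continuous (F t))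
    (hF' : ContinuousOn F'.uncurry (s ×ˢ Set.univ))
    (hderiv : ∀ x, ∀ t ∈ s, HasDerivAt (F · x) (F' t x) t) :
    HasDerivAt (fun t ↦ ∫ x, F t x ∂μ) (∫ x, F' t₀ x ∂μ) t₀ := by
  obtain ⟨K, hK, hKs, hKc⟩ := local_compact_nhds hs
  obtain ⟨C, hC⟩ := (hKc.prod isCompact_univ).exists_bound_of_continuousOn
    (hF'.mono (Set.prod_mono_left hKs))
  have hF'₀ : Continuous (F' t₀) :=
    hF'.comp_continuous (Continuous.prodMk_right t₀) fun x ↦ ⟨mem_of_mem_nhds hs, Set.mem_univ x⟩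
  refine (hasDerivAt_integral_of_dominated_loc_of_deriv_le (bound := fun _ ↦ C) hK ?_
    (integrable_of_continuous (hF t₀ (mem_of_mem_nhds hs)))
    (integrable_of_continuous hF'₀).aestronglyMeasurable
    (.of_forall fun x t ht ↦ hC (t, x) ⟨ht, Set.mem_univ x⟩)
    (integrable_of_continuous continuous_const)
    (.of_forall fun x t ht ↦ hderiv x t (hKs ht))).2
  filter_upwards [hs] with t ht
  exact (integrable_of_continuous (hF t ht)).aestronglyMeasurable

variable {X E : Type*} [TopologicalSpace X] [CompactSpace X] [MeasurableSpace X]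
  [OpensMeasurableSpace X] {μ : Measure X} [IsFiniteMeasureOnCompacts μ] [NormedAddCommGroup E]
  [InnerProductSpace ℝ E]

theorem hasDerivAt_integral_norm_add_smul_sq_rpow (q : ℝ) {f g : X → E} (hf : Continuous f)
    (hg : Continuous g) (hf_ne : ∀ x, f x ≠ 0) :
    HasDerivAt (fun t : ℝ ↦ ∫ x, (‖f x + t • g x‖ ^ 2) ^ q ∂μ)
      (∫ x, 2 * inner ℝ (f x) (g x) * q * (‖f x‖ ^ 2) ^ (q - 1) ∂μ) 0 := by
  have hcont : Continuous fun z : ℝ × X ↦ f z.2 + z.1 • g z.2 := by fun_prop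
  let s : Set ℝ := {t | ∀ x ∈ Set.univ, f x + t • g x ≠ 0}
  have hs : s ∈ 𝓝 0 := isCompact_univ.eventually_forall_of_forall_eventually fun x _ ↦
    hcont.continuousAt.eventually_ne (by simpa using hf_ne x)
  have hne {t : ℝ} (ht : t ∈ s) (x : X) : ‖f x + t • g x‖ ^ 2 ≠ 0 :=
    pow_ne_zero 2 (norm_ne_zero_iff.2 (ht x (Set.mem_univ x)))
  let F' (t : ℝ) (x : X) : ℝ :=
    2 * inner ℝ (f x + t • g x) (g x) * q * (‖f x + t • g x‖ ^ 2) ^ (q - 1)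
  have hF' : ContinuousOn F'.uncurry (s ×ˢ Set.univ) :=
    ContinuousOn.mul (by fun_prop) <|
      (hcont.norm.pow 2).continuousOn.rpow_const fun z hz ↦ .inl (hne hz.1 z.2)
  have hF (t : ℝ) (ht : t ∈ s) : Continuous fun x ↦ (‖f x + t • g x‖ ^ 2) ^ q :=
    Continuous.rpow_const (by fun_prop) fun x ↦ .inl (hne ht x)
  have hderiv (x : X) (t : ℝ) (ht : t ∈ s) :
      HasDerivAt (fun t : ℝ ↦ (‖f x + t • g x‖ ^ 2) ^ q) (F' t x) t := by
    have hline : HasDerivAt (fun t : ℝ ↦ f x + t • g x) (g x) t := by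
      simpa using ((hasDerivAt_id t).smul_const (g x)).const_add (f x)
    exact hline.norm_sq.rpow_const (.inl (hne ht x))
  simpa [F'] using hasDerivAt_integral_of_continuousOn hs hF hF' hderiv

theorem integral_inner_mul_rpow_eq_zero {q : ℝ} (hq : q ≠ 0) {f g : X → E} (hf : Continuous f)
    (hg : Continuous g) (hf_ne : ∀ x, f x ≠ 0)
    (hmin : ∀ t : ℝ, ∫ x, (‖f x‖ ^ 2) ^ q ∂μ ≤ ∫ x, (‖f x + t • g x‖ ^ 2) ^ q ∂μ) :
    ∫ x, inner ℝ (f x) (g x) * (‖f x‖ ^ 2) ^ (q - 1) ∂μ = 0 := by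
  have hlocalMin : IsLocalMin (fun t : ℝ ↦ ∫ x, (‖f x + t • g x‖ ^ 2) ^ q ∂μ) 0 :=
    .of_forall fun t ↦ by simpa using hmin t
  have hzero := hlocalMin.hasDerivAt_eq_zero
    (hasDerivAt_integral_norm_add_smul_sq_rpow q hf hg hf_ne)
  have hfactor : ∫ x, 2 * inner ℝ (f x) (g x) * q * (‖f x‖ ^ 2) ^ (q - 1) ∂μ
      = 2 * q * ∫ x, inner ℝ (f x) (g x) * (‖f x‖ ^ 2) ^ (q - 1) ∂μ := by
    rw [← integral_const_mul]
    exact integral_congr_ae (.of_forall fun x ↦ by ring)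
  rw [hfactor] at hzero
  exact (mul_eq_zero.1 hzero).resolve_left (mul_ne_zero two_ne_zero hq)

theorem integral_rpow_mul_star_mul_eq_zero {q : ℝ} (hq : q ≠ 0) {f g : X → ℂ}
    (hf : Continuous f) (hg : Continuous g) (hf_ne : ∀ x, f x ≠ 0)
    (hmin : ∀ c : ℂ, ∫ x, (‖f x‖ ^ 2) ^ q ∂μ ≤ ∫ x, (‖f x + c * g x‖ ^ 2) ^ q ∂μ) :
    ∫ x, ((‖f x‖ ^ 2) ^ (q - 1) : ℝ) * star (f x) * g x ∂μ = 0 := by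
  have hrpow : Continuous fun x ↦ (‖f x‖ ^ 2) ^ (q - 1) :=
    (hf.norm.pow 2).rpow_const fun x ↦ .inl (pow_ne_zero 2 (norm_ne_zero_iff.2 (hf_ne x)))
  have hint : Integrable (fun x ↦ ((‖f x‖ ^ 2) ^ (q - 1) : ℝ) * star (f x) * g x) μ :=
    integrable_of_continuous (((Complex.continuous_ofReal.comp hrpow).mul hf.star).mul hg)
  have hre (c : ℂ) : (c * ∫ x, ((‖f x‖ ^ 2) ^ (q - 1) : ℝ) * star (f x) * g x ∂μ).re = 0 := by
    rw [← integral_const_mul, ← RCLike.re_eq_complex_re, ← integral_re (hint.const_mul c),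
      ← integral_inner_mul_rpow_eq_zero (μ := μ) hq hf (hg.const_smul c) hf_ne fun t ↦ by
        simpa [mul_assoc] using hmin (t * c)]
    refine integral_congr_ae (.of_forall fun x ↦ ?_)
    beta_reduce
    rw [mul_comm c, mul_assoc, mul_assoc, RCLike.re_eq_complex_re, Complex.re_ofReal_mul, mul_comm]
    simp [Complex.inner, mul_comm]
  exact Complex.ext (by simpa using hre 1) (by simpa using hre Complex.I)

theorem IsContractiveHp.integral_eq_zero {d : ℕ} {p : ℝ≥0∞} (hp : p ≠ 0) (hp_top : p ≠ ⊤)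
    {Γ : Set (Fin d → ℤ)} (hΓ : Γ ⊆ NN d) (h : IsContractiveHp d p Γ) {f g : Torus d → ℂ}
    (hf : f ∈ trigPolySpace Γ) (hf_ne : ∀ x, f x ≠ 0) (hg : g ∈ trigPolySpace (NN d \ Γ)) :
    ∫ x, ((‖f x‖ ^ 2) ^ (p.toReal / 2 - 1) : ℝ) * star (f x) * g x = 0 := by
  have hcf := continuous_of_mem_trigPolySpace hf
  have hcg := continuous_of_mem_trigPolySpace hg
  have hq : p.toReal / 2 ≠ 0 := div_ne_zero (ENNReal.toReal_pos hp hp_top).ne' two_ne_zero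
  have rpow_half (z : ℂ) : (‖z‖ ^ 2) ^ (p.toReal / 2) = ‖z‖ ^ p.toReal := by
    rw [← Real.rpow_natCast, ← Real.rpow_mul (norm_nonneg z), Nat.cast_two,
      mul_div_cancel₀ _ two_ne_zero]
  refine integral_rpow_mul_star_mul_eq_zero hq hcf hcg hf_ne fun c ↦ ?_
  simp only [rpow_half]
  exact (eLpNorm_le_eLpNorm_iff_integral hp hp_top hcf (hcf.add (hcg.const_smul c))).1
    ((isContractiveHp_iff hΓ).1 h f hf _ (Submodule.smul_mem _ c hg))

end FirstVariation

section BinomialSeries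

theorem hasSum_choose_mul_pow (q : ℝ) {u : ℂ} (hu : ‖u‖ < 1) :
    HasSum (fun n : ℕ ↦ ((Ring.choose q n : ℝ) : ℂ) * u ^ n) ((1 + u) ^ (q : ℂ)) := by
  have hball : u ∈ Metric.eball (0 : ℂ) 1 := by
    simpa [Metric.mem_eball, edist_zero_right, enorm_eq_nnnorm, ← NNReal.coe_lt_one] using hu
  have hsum := (Complex.one_add_cpow_hasFPowerSeriesOnBall_zero (a := (q : ℂ))).hasSum hball
  rw [zero_add] at hsum
  refine hsum.congr_fun fun n ↦ ?_
  rw [binomialSeries_apply, ← Complex.ofReal_choose, List.ofFn_const, List.prod_replicate,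
    smul_eq_mul]

theorem summable_abs_choose_mul_pow (q : ℝ) {r : ℝ} (hr : ‖r‖ < 1) :
    Summable fun n : ℕ ↦ |Ring.choose q n| * ‖r‖ ^ n := by
  have hr' : ‖(r : ℂ)‖ < 1 := by rwa [Complex.norm_real]
  simpa using (hasSum_choose_mul_pow q hr').summable.norm

theorem succ_mul_choose_succ (q : ℝ) (n : ℕ) :
    (n + 1) * Ring.choose q (n + 1) = q * Ring.choose (q - 1) n := by
  simpa using Ring.choose_smul_choose q (Nat.le_add_left 1 n)

theorem choose_succ_mul_choose_nonneg {q : ℝ} (hq : 0 ≤ q) (n : ℕ) :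
    0 ≤ Ring.choose q (n + 1) * Ring.choose (q - 1) n := by
  refine nonneg_of_mul_nonneg_right (a := (n + 1 : ℝ)) ?_ (by positivity)
  rw [← mul_assoc, succ_mul_choose_succ, mul_assoc]
  exact mul_nonneg hq (mul_self_nonneg _)

theorem choose_three_mul_choose_two_ne_zero {q : ℝ} (h0 : q ≠ 0) (h1 : q ≠ 1) (h2 : q ≠ 2) :
    Ring.choose q 3 * Ring.choose (q - 1) 2 ≠ 0 := by
  have hsucc_three := succ_mul_choose_succ q 2
  have hsucc_two := succ_mul_choose_succ (q - 1) 1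
  rw [Ring.choose_one_right] at hsucc_two
  have hchoose_two : Ring.choose (q - 1) 2 ≠ 0 := by
    refine right_ne_zero_of_mul (hsucc_two ▸ mul_ne_zero (sub_ne_zero.2 h1) ?_)
    rw [sub_sub, one_add_one_eq_two]
    exact sub_ne_zero.2 h2
  exact mul_ne_zero (right_ne_zero_of_mul (hsucc_three ▸ mul_ne_zero h0 hchoose_two)) hchoose_two

theorem norm_sq_rpow_sub_one_mul_star (q : ℝ) {z : ℂ} (hz : z ≠ 0) :
    ((‖z‖ ^ 2) ^ (q - 1) : ℝ) * star z = star (z ^ (q : ℂ)) * z ^ ((q - 1 : ℝ) : ℂ) := by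
  have hpow : z ^ (q : ℂ) = z ^ ((q - 1 : ℝ) : ℂ) * z := by
    rw [Complex.ofReal_sub, Complex.ofReal_one, Complex.cpow_sub _ _ hz, Complex.cpow_one,
      div_mul_cancel₀ _ hz]
  have hnorm : (((‖z‖ ^ 2) ^ (q - 1) : ℝ) : ℂ)
      = z ^ ((q - 1 : ℝ) : ℂ) * star (z ^ ((q - 1 : ℝ) : ℂ)) := by
    rw [RCLike.star_def, Complex.mul_conj, Complex.normSq_eq_norm_sq, Complex.norm_cpow_real,
      ← Real.rpow_natCast, ← Real.rpow_natCast, ← Real.rpow_mul (norm_nonneg _),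
      ← Real.rpow_mul (norm_nonneg _), mul_comm]
  rw [hpow, hnorm, star_mul']
  ring

theorem hasSum_choose_mul_choose_mul_pow (q : ℝ) {u : ℂ} (hu : ‖u‖ < 1) :
    HasSum (fun n : ℕ × ℕ ↦ ((Ring.choose q n.1 * Ring.choose (q - 1) n.2 : ℝ) : ℂ)
      * (star u ^ n.1 * u ^ n.2)) (((‖1 + u‖ ^ 2) ^ (q - 1) : ℝ) * star (1 + u)) := by
  have hne : 1 + u ≠ 0 := by
    intro h
    rw [← neg_eq_of_add_eq_zero_right h, norm_neg, norm_one] at hu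
    exact lt_irrefl _ hu
  rw [norm_sq_rpow_sub_one_mul_star q hne]
  have hleft := (hasSum_choose_mul_pow q hu).star
  have hright := hasSum_choose_mul_pow (q - 1) hu
  have hsummable := summable_mul_of_summable_norm hleft.summable.norm hright.summable.norm
  refine (hleft.mul hright hsummable).congr_fun fun n ↦ ?_
  rw [star_mul', star_pow, RCLike.star_def, Complex.conj_ofReal, Complex.ofReal_mul,
    mul_mul_mul_comm]

theorem summable_abs_choose_mul_choose_mul_pow (q : ℝ) {r : ℝ} (hr : ‖r‖ < 1) :
    Summable fun n : ℕ × ℕ ↦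
      |Ring.choose q n.1 * Ring.choose (q - 1) n.2| * (‖r‖ ^ n.1 * ‖r‖ ^ n.2) := by
  refine ((summable_abs_choose_mul_pow q hr).mul_of_nonneg
    (summable_abs_choose_mul_pow (q - 1) hr) (fun n ↦ by positivity)
    fun n ↦ by positivity).congr fun n ↦ ?_
  rw [abs_mul]
  ring

end BinomialSeries

section TermwiseIntegration

theorem hasSum_integral_of_continuous {ι X E : Type*} [Countable ι] [TopologicalSpace X]
    [CompactSpace X] [MeasurableSpace X] [OpensMeasurableSpace X] {μ : Measure X}
    [IsFiniteMeasureOnCompacts μ] [NormedAddCommGroup E] [NormedSpace ℝ E] {F : ι → X → E}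
    {G : X → E} {b : ι → ℝ} (hF : ∀ i, Continuous (F i)) (hFb : ∀ i x, ‖F i x‖ ≤ b i)
    (hb : Summable b) (hG : ∀ x, HasSum (F · x) (G x)) :
    HasSum (fun i ↦ ∫ x, F i x ∂μ) (∫ x, G x ∂μ) :=
  hasSum_integral_of_dominated_convergence (fun i _ ↦ b i)
    (fun i ↦ (integrable_of_continuous (hF i)).aestronglyMeasurable)
    (fun i ↦ .of_forall (hFb i)) (.of_forall fun _ ↦ hb)
    (integrable_of_continuous continuous_const) (.of_forall hG)

/-- Integrating against `ζ ^ k` over the circle `|ζ| = r` isolates the terms of total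
degree `-k`. -/
theorem hasSum_diagonal_of_forall_hasSum_zero {C : ℕ × ℕ → ℂ} {r : ℝ} (hr : 0 ≤ r)
    (h : ∀ ζ : ℂ, ‖ζ‖ = r → HasSum (fun n : ℕ × ℕ ↦ C n * (star ζ ^ n.1 * ζ ^ n.2)) 0) (k : ℕ) :
    HasSum (fun n : ℕ ↦ C (n + k, n) * r ^ (n + k + n)) 0 := by
  let ζ (x : AddCircle (1 : ℝ)) : ℂ := r * fourier 1 x
  let F (n : ℕ × ℕ) (x : AddCircle (1 : ℝ)) : ℂ :=
    C n * r ^ (n.1 + n.2) * fourier (n.2 - n.1 + k) x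
  have norm_fourier (n : ℤ) (x : AddCircle (1 : ℝ)) : ‖(fourier n x : ℂ)‖ = 1 := by
    rw [fourier_apply, Circle.norm_coe]
  have norm_r : ‖(r : ℂ)‖ = r := by rw [Complex.norm_real, Real.norm_of_nonneg hr]
  have hζ (x : AddCircle (1 : ℝ)) : ‖ζ x‖ = r := by
    rw [norm_mul, norm_fourier, norm_r, mul_one]
  have fourier_natCast (n : ℕ) (x : AddCircle (1 : ℝ)) :
      (fourier n x : ℂ) = fourier 1 x ^ n := by
    induction n with
    | zero => simp
    | succ n ih => rw [Nat.cast_succ, fourier_add, ih, pow_succ]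
  have hterm (n : ℕ × ℕ) (x : AddCircle (1 : ℝ)) :
      F n x = C n * (star (ζ x) ^ n.1 * ζ x ^ n.2) * fourier k x := by
    simp only [F, ζ, sub_eq_add_neg, fourier_add, fourier_neg, fourier_natCast, star_mul',
      map_pow, RCLike.star_def, Complex.conj_ofReal]
    ring
  have hF (n : ℕ × ℕ) (x : AddCircle (1 : ℝ)) :
      ‖F n x‖ ≤ ‖C n * (star (r : ℂ) ^ n.1 * r ^ n.2)‖ := by
    simp only [F, norm_mul, norm_pow, norm_star, norm_fourier, mul_one, pow_add, le_refl]
  have hsum : HasSum (fun n ↦ ∫ x, F n x) (∫ _ : AddCircle (1 : ℝ), (0 : ℂ)) := by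
    refine hasSum_integral_of_continuous (μ := volume) (fun n ↦ by fun_prop) hF
      (h r norm_r).summable.norm fun x ↦ ?_
    simpa only [hterm, zero_mul] using (h (ζ x) (hζ x)).mul_right (fourier k x)
  simp only [F, integral_const_mul, integral_fourier, integral_zero] at hsum
  have hinj : Function.Injective fun n : ℕ ↦ (n + k, n) := fun m n hmn ↦ (Prod.ext_iff.1 hmn).2
  refine ((hinj.hasSum_iff fun n hn ↦ ?_).2 hsum).congr_fun fun n ↦ ?_
  · rw [if_neg, mul_zero]
    exact fun h0 ↦ hn ⟨n.2, Prod.ext (by dsimp only; lia) rfl⟩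
  · simp

end TermwiseIntegration

section Moments

/-- The number of ways to write `κ` as a sum of `m` terms of the family `e` minus a sum of `n`
terms of `e`. -/
def relationCount {ι M : Type*} [Fintype ι] [AddCommMonoid M] (e : ι → M) (κ : M) (m n : ℕ) : ℕ :=
  Nat.card {fg : (Fin m → ι) × (Fin n → ι) // ∑ j, e (fg.2 j) + κ = ∑ j, e (fg.1 j)}

variable {d : ℕ} {ι : Type*} [Fintype ι]

/-- The sum of the characters with frequencies in the family `e`. -/
def charSum (e : ι → Fin d → ℤ) (x : Torus d) : ℂ :=
  ∑ i, torusChar (e i) x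

@[fun_prop]
theorem continuous_charSum (e : ι → Fin d → ℤ) : Continuous (charSum e) := by
  unfold charSum
  fun_prop

theorem norm_charSum_le (e : ι → Fin d → ℤ) (x : Torus d) : ‖charSum e x‖ ≤ Fintype.card ι := by
  simpa [charSum] using norm_sum_le Finset.univ fun i ↦ torusChar (e i) x

theorem charSum_pow (e : ι → Fin d → ℤ) (n : ℕ) (x : Torus d) :
    charSum e x ^ n = ∑ g : Fin n → ι, torusChar (∑ j, e (g j)) x := by
  simp only [charSum, Fintype.sum_pow, torusChar_sum]

theorem integral_star_charSum_pow_mul_charSum_pow_mul (e : ι → Fin d → ℤ) (κ : Fin d → ℤ)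
    (m n : ℕ) :
    ∫ x, star (charSum e x) ^ m * charSum e x ^ n * torusChar κ x = relationCount e κ m n := by
  have expand (x : Torus d) : star (charSum e x) ^ m * charSum e x ^ n * torusChar κ x
      = ∑ fg : (Fin m → ι) × (Fin n → ι),
          torusChar (∑ j, e (fg.2 j) + κ - ∑ j, e (fg.1 j)) x := by
    rw [← star_pow, charSum_pow, charSum_pow, star_sum, Fintype.sum_mul_sum, Fintype.sum_prod_type,
      Finset.sum_mul]
    refine Finset.sum_congr rfl fun f _ ↦ ?_
    rw [Finset.sum_mul]
    refine Finset.sum_congr rfl fun g _ ↦ ?_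
    rw [torusChar_sub, torusChar_add]
    ring
  simp only [expand]
  rw [integral_finsetSum _ fun fg _ ↦ integrable_of_continuous (continuous_torusChar _)]
  simp only [integral_torusChar, sub_eq_zero, Finset.sum_boole, relationCount,
    Nat.card_eq_fintype_card, Fintype.card_subtype]

theorem norm_mul_charSum_lt_one {e : ι → Fin d → ℤ} {ζ : ℂ} (hζ : ‖ζ‖ * Fintype.card ι < 1)
    (x : Torus d) : ‖ζ * charSum e x‖ < 1 := by
  rw [norm_mul]
  exact (mul_le_mul_of_nonneg_left (norm_charSum_le e x) (norm_nonneg ζ)).trans_lt hζ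

theorem hasSum_choose_mul_relationCount (q : ℝ) (e : ι → Fin d → ℤ) (κ : Fin d → ℤ) {ζ : ℂ}
    (hζ : ‖ζ‖ * Fintype.card ι < 1) :
    HasSum (fun n : ℕ × ℕ ↦ ((Ring.choose q n.1 * Ring.choose (q - 1) n.2 : ℝ) : ℂ)
        * relationCount e κ n.1 n.2 * (star ζ ^ n.1 * ζ ^ n.2))
      (∫ x, ((‖1 + ζ * charSum e x‖ ^ 2) ^ (q - 1) : ℝ) * star (1 + ζ * charSum e x)
        * torusChar κ x) := by
  let F (n : ℕ × ℕ) (x : Torus d) : ℂ := ((Ring.choose q n.1 * Ring.choose (q - 1) n.2 : ℝ) : ℂ)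
    * (star (ζ * charSum e x) ^ n.1 * (ζ * charSum e x) ^ n.2) * torusChar κ x
  have hF (n : ℕ × ℕ) (x : Torus d) : ‖F n x‖ ≤ |Ring.choose q n.1 * Ring.choose (q - 1) n.2|
      * (‖‖ζ‖ * Fintype.card ι‖ ^ n.1 * ‖‖ζ‖ * Fintype.card ι‖ ^ n.2) := by
    rw [Real.norm_of_nonneg (show 0 ≤ ‖ζ‖ * Fintype.card ι by positivity)]
    simp only [F, norm_mul, norm_pow, norm_star, norm_torusChar, mul_one, Complex.norm_real,
      Real.norm_eq_abs, abs_mul]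
    gcongr <;> exact norm_charSum_le e x
  have hint (n : ℕ × ℕ) : ∫ x, F n x = ((Ring.choose q n.1 * Ring.choose (q - 1) n.2 : ℝ) : ℂ)
      * relationCount e κ n.1 n.2 * (star ζ ^ n.1 * ζ ^ n.2) := by
    rw [← integral_star_charSum_pow_mul_charSum_pow_mul, mul_right_comm, ← integral_const_mul]
    refine integral_congr_ae (.of_forall fun x ↦ ?_)
    simp only [F, star_mul', mul_pow]
    ring
  have hsummable := summable_abs_choose_mul_choose_mul_pow q (r := ‖ζ‖ * Fintype.card ι)
    (by rwa [Real.norm_of_nonneg (by positivity)])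
  simp only [← hint]
  refine hasSum_integral_of_continuous (fun n ↦ ?_) hF hsummable fun x ↦
    (hasSum_choose_mul_choose_mul_pow q (norm_mul_charSum_lt_one hζ x)).mul_right _
  fun_prop

variable {p : ℝ≥0∞} {Γ : Set (Fin d → ℤ)} {e : ι → Fin d → ℤ} {γ κ : Fin d → ℤ}

theorem IsContractiveHp.integral_charSum_eq_zero (hp : p ≠ 0) (hp_top : p ≠ ⊤) (hΓ : Γ ⊆ NN d)
    (h : IsContractiveHp d p Γ) (hγ : γ ∈ Γ) (he : ∀ i, γ + e i ∈ Γ) (hκ : γ + κ ∈ NN d \ Γ)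
    {ζ : ℂ} (hζ : ‖ζ‖ * Fintype.card ι < 1) :
    ∫ x, ((‖1 + ζ * charSum e x‖ ^ 2) ^ (p.toReal / 2 - 1) : ℝ) * star (1 + ζ * charSum e x)
      * torusChar κ x = 0 := by
  let f : Torus d → ℂ := torusChar γ + ζ • ∑ i, torusChar (γ + e i)
  have hf : f ∈ trigPolySpace Γ :=
    add_mem (torusChar_mem_trigPolySpace hγ) <| Submodule.smul_mem _ ζ <|
      sum_mem fun i _ ↦ torusChar_mem_trigPolySpace (he i)
  have hfactor (x : Torus d) : f x = torusChar γ x * (1 + ζ * charSum e x) := by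
    simp only [f, Pi.add_apply, Pi.smul_apply, Finset.sum_apply, torusChar_add, ← Finset.mul_sum,
      charSum, smul_eq_mul]
    ring
  have hf_ne (x : Torus d) : f x ≠ 0 := by
    rw [hfactor]
    refine mul_ne_zero (norm_ne_zero_iff.1 (by rw [norm_torusChar]; exact one_ne_zero)) fun h0 ↦ ?_
    have hlt := norm_mul_charSum_lt_one (e := e) hζ x
    rw [← neg_eq_of_add_eq_zero_right h0, norm_neg, norm_one] at hlt
    exact lt_irrefl _ hlt
  rw [← h.integral_eq_zero hp hp_top hΓ hf hf_ne (torusChar_mem_trigPolySpace hκ)]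
  refine integral_congr_ae (.of_forall fun x ↦ ?_)
  have hγx : star (torusChar γ x) * torusChar γ x = 1 := by
    rw [mul_comm, ← torusChar_sub, sub_self, torusChar_zero]
  simp only [hfactor, norm_mul, norm_torusChar, one_mul, star_mul', torusChar_add]
  linear_combination (-((‖1 + ζ * charSum e x‖ ^ 2) ^ (p.toReal / 2 - 1) : ℝ)
    * star (1 + ζ * charSum e x) * torusChar κ x) * hγx

theorem IsContractiveHp.relationCount_eq_zero (hp : p ≠ 0) (hp_top : p ≠ ⊤) (hΓ : Γ ⊆ NN d)
    (h : IsContractiveHp d p Γ) (hγ : γ ∈ Γ) (he : ∀ i, γ + e i ∈ Γ) (hκ : γ + κ ∈ NN d \ Γ)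
    {n : ℕ} (hn : Ring.choose (p.toReal / 2) (n + 1) * Ring.choose (p.toReal / 2 - 1) n ≠ 0) :
    relationCount e κ (n + 1) n = 0 := by
  set q := p.toReal / 2
  have hq : 0 ≤ q := by positivity
  obtain ⟨r, hr, hr_lt⟩ : ∃ r : ℝ, 0 < r ∧ r * Fintype.card ι < 1 :=
    ⟨1 / (Fintype.card ι + 1), by positivity, by rw [one_div_mul_eq_div, div_lt_one] <;> linarith⟩
  have hdiag := hasSum_diagonal_of_forall_hasSum_zero hr.le (fun ζ hζ ↦ by
    rw [← hζ] at hr_lt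
    rw [← h.integral_charSum_eq_zero hp hp_top hΓ hγ he hκ hr_lt]
    exact hasSum_choose_mul_relationCount q e κ hr_lt) 1
  have hreal : HasSum (fun n : ℕ ↦ Ring.choose q (n + 1) * Ring.choose (q - 1) n
      * relationCount e κ (n + 1) n * r ^ (n + 1 + n)) 0 :=
    Complex.hasSum_ofReal.1 (by simpa using hdiag)
  rw [hasSum_zero_iff_of_nonneg fun n ↦ by
    have := choose_succ_mul_choose_nonneg hq n
    positivity] at hreal
  simpa [mul_eq_zero, hr.ne', or_assoc, mul_ne_zero_iff.1 hn] using congrFun hreal n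

theorem IsContractiveHp.sum_sub_sum_mem (hp : p ≠ 0) (hp_top : p ≠ ⊤) (hΓ : Γ ⊆ NN d)
    (h : IsContractiveHp d p Γ) {n : ℕ}
    (hn : Ring.choose (p.toReal / 2) (n + 1) * Ring.choose (p.toReal / 2 - 1) n ≠ 0)
    {a : Fin (n + 1) → Fin d → ℤ} {b : Fin n → Fin d → ℤ} (ha : ∀ i, a i ∈ Γ) (hb : ∀ i, b i ∈ Γ)
    (hmem : ∑ i, a i - ∑ i, b i ∈ NN d) : ∑ i, a i - ∑ i, b i ∈ Γ := by
  by_contra hnotMem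
  let e (i : Fin (n + 1) ⊕ Fin n) : Fin d → ℤ := Sum.elim a b i - a 0
  let κ : Fin d → ℤ := ∑ i, a i - ∑ i, b i - a 0
  have he (i : Fin (n + 1) ⊕ Fin n) : a 0 + e i ∈ Γ := by
    rw [add_sub_cancel]
    exact i.rec ha hb
  have hκ : a 0 + κ ∈ NN d \ Γ := by
    rw [add_sub_cancel]
    exact ⟨hmem, hnotMem⟩
  refine (Nat.card_pos_iff.2 ⟨⟨⟨(Sum.inl, Sum.inr), ?_⟩⟩, inferInstance⟩).ne'
    (h.relationCount_eq_zero hp hp_top hΓ (ha 0) he hκ hn)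
  simp only [e, κ, Sum.elim_inl, Sum.elim_inr, Finset.sum_sub_distrib, Finset.sum_const,
    Finset.card_univ, Fintype.card_fin, succ_nsmul]
  abel

theorem IsContractiveHp.twoClosed (hp : p ≠ 0) (h2 : p ≠ 2) (h4 : p ≠ 4) (hΓ : Γ ⊆ NN d)
    (h : IsContractiveHp d p Γ) : TwoClosed (NN d) Γ := by
  by_cases hp_top : p = ⊤
  · subst hp_top
    exact h.twoClosed_top hΓ
  have hcoeff := choose_three_mul_choose_two_ne_zero (q := p.toReal / 2)
    (div_ne_zero (ENNReal.toReal_pos hp hp_top).ne' two_ne_zero)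
    (fun h1 ↦ h2 <| (ENNReal.toReal_eq_toReal_iff' hp_top ENNReal.ofNat_ne_top).1 <| by
      rw [ENNReal.toReal_ofNat]; linarith)
    (fun h1 ↦ h4 <| (ENNReal.toReal_eq_toReal_iff' hp_top ENNReal.ofNat_ne_top).1 <| by
      rw [ENNReal.toReal_ofNat]; linarith)
  refine ⟨hΓ, fun a b c u v ha hb hc hu hv hmem ↦ ?_⟩
  have heq : a + b + c - u - v = ∑ i, ![a, b, c] i - ∑ i, ![u, v] i := by
    simp only [Fin.sum_univ_three, Fin.sum_univ_two, sub_sub]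
    rfl
  rw [heq] at hmem ⊢
  exact h.sum_sub_sum_mem hp hp_top hΓ hcoeff (by simp [Fin.forall_fin_succ, ha, hb, hc])
    (by simp [Fin.forall_fin_succ, hu, hv]) hmem

end Moments

theorem contractive_restriction_property_b_general (d k : ℕ)
    (h : (d = 3 ∧ k = 3) ∨ (3 ≤ d ∧ k = 2)) (p : ℝ≥0∞) (hp : p ≠ 0) :
    ContractiveRestrictionProperty d p k ↔ (p ≠ 2 ∧ p ≠ 4) := by
  constructor
  · intro hrestrict
    rw [← not_or]
    intro h24
    rcases h with ⟨rfl, rfl⟩ | ⟨hd, rfl⟩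
    · exact not_contractiveRestrictionProperty_dim_three h24 hrestrict
    · exact not_contractiveRestrictionProperty_dim_two h24 hd hrestrict
  · rintro ⟨h2, h4⟩ Γ hne hΓ hdim hcontr
    have hclosed : TwoClosed (NN d) Γ := hcontr.twoClosed hp h2 h4 hΓ
    rcases h with ⟨rfl, rfl⟩ | ⟨-, rfl⟩
    · exact hclosed.exists_isCoset_of_hasDim_three hne hdim
    · exact hclosed.exists_isCoset_of_hasDim_two hne hdim

/-- Theorem 2 (b): if `d = k = 3`, or `d ≥ 3` and `k = 2`, then `H^p(𝕋^d)` enjoys the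
contractive restriction property of dimension `k` iff `p ∉ {2, 4}`. -/
theorem contractive_restriction_property_b (d k : ℕ) (hd : 1 ≤ d) (hk : 1 ≤ k)
    (hkd : k ≤ d) (h : (d = 3 ∧ k = 3) ∨ (3 ≤ d ∧ k = 2)) (p : ℝ≥0∞) (hp : 1 ≤ p) :
    ContractiveRestrictionProperty d p k ↔ (p ≠ 2 ∧ p ≠ 4) :=
  contractive_restriction_property_b_general d k h p (one_pos.trans_le hp).ne'

end
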